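/- Let p, q, s be distinct primes with p ≡ 5 (mod 8), q ≡ 3 (mod 8), s ≡ 3 (mod 4), and with p a quadratic residue mod q and a quadratic residue mod s. Then the 2-Sylow subgroup of the ideal class group of the real biquadratic field F = ℚ(√(pq), √(ps)) is isomorphic to ℤ/2ℤ × ℤ/2ℤ. -/

import Mathlib

open NumberField


/-- Norm residue symbol computation. -/
lemma norm_residue (l : ℕ) [Fact l.Prime] (e : ℤ) (he : ¬ (l : ℤ) ∣ e) (u : ℤ) (hu : ¬ (l : ℤ) ∣ u) :
    ∀ (v : ℕ) (X Y : ℤ), (l : ℤ) ^ v * u = X ^ 2 - l * e * Y ^ 2 →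
      legendreSym l u = legendreSym l (-e) ^ v := by
  have hl : Prime (l : ℤ) := Nat.prime_iff_prime_int.mp (Fact.out)
  have hl0 : (l : ℤ) ≠ 0 := hl.ne_zero
  have key : ∀ (a b X : ℤ), ¬ (l : ℤ) ∣ a → (l : ℤ) ∣ a - b * X ^ 2 → legendreSym l a = legendreSym l b := by
    intro a b X ha hd
    have hX : ((X : ℤ) : ZMod l) ≠ 0 := by
      intro h
      rw [ZMod.intCast_zmod_eq_zero_iff_dvd] at h
      apply ha
      have : a = (a - b * X ^ 2) + X * (b * X) := by ring
      rw [this]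
      exact dvd_add hd (h.mul_right _)
    have h1 : ((a : ℤ) : ZMod l) = ((b * X ^ 2 : ℤ) : ZMod l) := by
      rw [← sub_eq_zero, ← Int.cast_sub, ZMod.intCast_zmod_eq_zero_iff_dvd]; exact hd
    have h2 : legendreSym l a = legendreSym l (b * X ^ 2) := by
      unfold legendreSym; rw [h1]
    rw [h2, legendreSym.mul, legendreSym.sq_one' l hX, mul_one]
  intro v
  induction v using Nat.strong_induction_on with
  | _ v ih =>
    intro X Y h
    rcases Nat.lt_or_ge v 1 with h0 | h0
    · obtain rfl : v = 0 := by omega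
      rw [pow_zero, ← legendreSym.at_one (p := l)]
      apply key u 1 X hu
      exact ⟨-(e * Y ^ 2), by linear_combination h⟩
    · obtain ⟨w, rfl⟩ : ∃ w, v = w + 1 := ⟨v - 1, by omega⟩
      have hX : (l : ℤ) ∣ X := by
        apply hl.dvd_of_dvd_pow (n := 2)
        exact ⟨l ^ w * u + e * Y ^ 2, by rw [pow_succ] at h; linear_combination -h⟩
      obtain ⟨X, rfl⟩ := hX
      have h' : (l : ℤ) ^ w * u = l * X ^ 2 - e * Y ^ 2 := by
        apply mul_left_cancel₀ hl0; rw [pow_succ] at h; linear_combination h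
      rcases Nat.lt_or_ge w 1 with h1 | h1
      · obtain rfl : w = 0 := by omega
        rw [zero_add, pow_one]
        apply key u (-e) Y hu
        exact ⟨X ^ 2, by linear_combination h'⟩
      · obtain ⟨w, rfl⟩ : ∃ z, w = z + 1 := ⟨w - 1, by omega⟩
        have hY : (l : ℤ) ∣ Y := by
          have : (l : ℤ) ∣ e * Y ^ 2 :=
            ⟨X ^ 2 - l ^ w * u, by rw [pow_succ] at h'; linear_combination h'⟩
          exact hl.dvd_of_dvd_pow ((hl.dvd_or_dvd this).resolve_left he)
        obtain ⟨Y, rfl⟩ := hY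
        have h'' : (l : ℤ) ^ w * u = X ^ 2 - l * e * Y ^ 2 := by
          apply mul_left_cancel₀ hl0; rw [pow_succ] at h'; linear_combination h'
        have hne : legendreSym l (-e) ^ 2 = 1 := by
          apply legendreSym.sq_one
          rw [ne_eq, ZMod.intCast_zmod_eq_zero_iff_dvd, dvd_neg]; exact he
        rw [ih w (by omega) X Y h'', show w + 1 + 1 = w + 2 by rfl, pow_add, hne, mul_one]

lemma norm_unram (l : ℕ) [Fact l.Prime] (c : ℤ) (hc : ¬ IsSquare (c : ZMod l)) (u : ℤ)
    (hu : ¬ (l : ℤ) ∣ u) :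
    ∀ (v : ℕ) (X Y : ℤ), (l : ℤ) ^ v * u = X ^ 2 - c * Y ^ 2 → Even v := by
  have hl : Prime (l : ℤ) := Nat.prime_iff_prime_int.mp (Fact.out)
  have hl0 : (l : ℤ) ≠ 0 := hl.ne_zero
  intro v
  induction v using Nat.strong_induction_on with
  | _ v ih =>
    intro X Y h
    rcases Nat.lt_or_ge v 1 with h0 | h0
    · obtain rfl : v = 0 := by omega
      simp
    · obtain ⟨w, rfl⟩ : ∃ w, v = w + 1 := ⟨v - 1, by omega⟩
      have h1 : ((X : ZMod l)) ^ 2 = c * (Y : ZMod l) ^ 2 := by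
        have := congrArg (Int.cast : ℤ → ZMod l) h
        push_cast at this
        rw [pow_succ] at this
        simp at this
        exact (sub_eq_zero.mp this.symm)
      have hY : (Y : ZMod l) = 0 := by
        by_contra hY
        apply hc
        refine ⟨(X : ZMod l) / Y, ?_⟩
        field_simp
        rw [h1]
      have hX : (X : ZMod l) = 0 := by
        rw [hY] at h1; simpa using h1
      rw [ZMod.intCast_zmod_eq_zero_iff_dvd] at hX hY
      obtain ⟨X, rfl⟩ := hX
      obtain ⟨Y, rfl⟩ := hY
      have h' : (l : ℤ) ^ w * u = l * (X ^ 2 - c * Y ^ 2) := by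
        apply mul_left_cancel₀ hl0; rw [pow_succ] at h; linear_combination h
      rcases Nat.lt_or_ge w 1 with h2 | h2
      · obtain rfl : w = 0 := by omega
        exact absurd ⟨_, by rw [← h']; ring⟩ hu
      · obtain ⟨w, rfl⟩ : ∃ z, w = z + 1 := ⟨w - 1, by omega⟩
        have h'' : (l : ℤ) ^ w * u = X ^ 2 - c * Y ^ 2 := by
          apply mul_left_cancel₀ hl0; rw [pow_succ] at h'; linear_combination h'
        have := ih w (by omega) X Y h''
        rw [Nat.even_add_one, Nat.even_add_one]; simpa using this

/-- clearing denominators -/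
lemma clear_den (n d : ℤ) (X Y : ℚ) (h : (n : ℚ) = X ^ 2 - d * Y ^ 2) :
    ∃ D A B : ℤ, D ≠ 0 ∧ D ^ 2 * n = A ^ 2 - d * B ^ 2 := by
  refine ⟨X.den * Y.den, X.num * Y.den, Y.num * X.den, by simp, ?_⟩
  have hX := Rat.mul_den_eq_num X
  have hY := Rat.mul_den_eq_num Y
  have : (((X.den * Y.den : ℤ) ^ 2 * n : ℤ) : ℚ)
      = (((X.num * Y.den) ^ 2 - d * (Y.num * X.den) ^ 2 : ℤ) : ℚ) := by
    push_cast
    rw [← hX, ← hY, h]; ring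
  exact_mod_cast this

lemma split_val (l : ℕ) [Fact l.Prime] (n : ℤ) (hn : n ≠ 0) :
    ∃ (v : ℕ) (u : ℤ), ¬ (l : ℤ) ∣ u ∧ n = l ^ v * u := by
  have hl : Prime (l : ℤ) := Nat.prime_iff_prime_int.mp (Fact.out)
  have hf : FiniteMultiplicity (l : ℤ) n := by
    rw [Int.finiteMultiplicity_iff]
    refine ⟨?_, hn⟩
    simpa using (Fact.out : l.Prime).ne_one
  obtain ⟨u, hu, hu'⟩ := hf.exists_eq_pow_mul_and_not_dvd
  exact ⟨_, u, hu', hu⟩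

/-- rational version -/
lemma norm_residue_rat (l : ℕ) [Fact l.Prime] (e : ℤ) (he : ¬ (l : ℤ) ∣ e) (u : ℤ)
    (hu : ¬ (l : ℤ) ∣ u) (v : ℕ) (X Y : ℚ)
    (h : (((l : ℤ) ^ v * u : ℤ) : ℚ) = X ^ 2 - ((l * e : ℤ) : ℚ) * Y ^ 2) :
      legendreSym l u = legendreSym l (-e) ^ v := by
  have hl : Prime (l : ℤ) := Nat.prime_iff_prime_int.mp (Fact.out)
  obtain ⟨D, A, B, hD, h1⟩ := clear_den _ _ X Y h
  obtain ⟨a, D', hD', rfl⟩ := split_val l D hD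
  have h2 := norm_residue l e he (D' ^ 2 * u) (by
    intro hh
    rcases hl.dvd_or_dvd hh with h3 | h3
    · exact hD' (hl.dvd_of_dvd_pow h3)
    · exact hu h3) (v + 2 * a) A B (by rw [← h1]; ring)
  have hD0 : ((D' : ℤ) : ZMod l) ≠ 0 := by
    rw [ne_eq, ZMod.intCast_zmod_eq_zero_iff_dvd]; exact hD'
  have hne : legendreSym l (-e) ^ 2 = 1 := by
    apply legendreSym.sq_one
    rw [ne_eq, ZMod.intCast_zmod_eq_zero_iff_dvd, dvd_neg]; exact he
  rw [legendreSym.mul, legendreSym.sq_one' l hD0, one_mul, pow_add, pow_mul, hne, one_pow, mul_one] at h2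
  exact h2

lemma norm_unram_rat (l : ℕ) [Fact l.Prime] (c : ℤ) (hc : ¬ IsSquare (c : ZMod l)) (u : ℤ)
    (hu : ¬ (l : ℤ) ∣ u) (v : ℕ) (X Y : ℚ)
    (h : (((l : ℤ) ^ v * u : ℤ) : ℚ) = X ^ 2 - (c : ℚ) * Y ^ 2) : Even v := by
  have hl : Prime (l : ℤ) := Nat.prime_iff_prime_int.mp (Fact.out)
  obtain ⟨D, A, B, hD, h1⟩ := clear_den _ _ X Y h
  obtain ⟨a, D', hD', rfl⟩ := split_val l D hD
  have h2 := norm_unram l c hc (D' ^ 2 * u) (by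
    intro hh
    rcases hl.dvd_or_dvd hh with h3 | h3
    · exact hD' (hl.dvd_of_dvd_pow h3)
    · exact hu h3) (v + 2 * a) A B (by rw [← h1]; ring)
  rw [Nat.even_add] at h2
  exact h2.mpr (by simp)

/-- signs of the three norms agree -/
lemma signs_agree (q : ℕ) [Fact q.Prime] (hq : q % 4 = 3) (p s : ℤ) (hp : IsSquare (p : ZMod q))
    (hp0 : ¬ (q : ℤ) ∣ p) (hs0 : ¬ (q : ℤ) ∣ s) (n : ℤ) (hn : n ≠ 0) (m : ℤ)
    (hm : m = n ∨ m = -n)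
    (X1 Y1 X2 Y2 X3 Y3 : ℚ) (h1 : (n : ℚ) = X1 ^ 2 - ((q * p : ℤ) : ℚ) * Y1 ^ 2)
    (h2 : (n : ℚ) = X2 ^ 2 - ((p * s : ℤ) : ℚ) * Y2 ^ 2 ∨ (-n : ℚ) = X2 ^ 2 - ((p * s : ℤ) : ℚ) * Y2 ^ 2)
    (h3 : (m : ℚ) = X3 ^ 2 - ((q * s : ℤ) : ℚ) * Y3 ^ 2) : m = n := by
  rcases hm with hm | hm
  · exact hm
  exfalso
  subst hm
  obtain ⟨v, u, hu, rfl⟩ := split_val q n hn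
  have hu' : ¬ (q : ℤ) ∣ -u := by rwa [dvd_neg]
  have e1 := norm_residue_rat q p hp0 u hu v X1 Y1 h1
  have e3 := norm_residue_rat q s hs0 (-u) hu' v X3 Y3 (by rw [← h3]; push_cast; ring)
  have hm1 : legendreSym q (-1) = -1 := by
    rw [legendreSym.at_neg_one (by rintro rfl; omega)]
    exact ZMod.χ₄_nat_three_mod_four hq
  have hneg : ∀ a, legendreSym q (-a) = - legendreSym q a := by
    intro a
    rw [show -a = -1 * a by ring, legendreSym.mul, hm1]; ring
  have hp0' : ((p : ℤ) : ZMod q) ≠ 0 := by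
    rw [ne_eq, ZMod.intCast_zmod_eq_zero_iff_dvd]; exact hp0
  have hs0' : ((s : ℤ) : ZMod q) ≠ 0 := by
    rw [ne_eq, ZMod.intCast_zmod_eq_zero_iff_dvd]; exact hs0
  have hu0' : ((u : ℤ) : ZMod q) ≠ 0 := by
    rw [ne_eq, ZMod.intCast_zmod_eq_zero_iff_dvd]; exact hu
  have hlp : legendreSym q p = 1 := (legendreSym.eq_one_iff q hp0').mpr hp
  rw [hneg, hlp] at e1
  rw [hneg, hneg] at e3
  rcases legendreSym.eq_one_or_neg_one q hs0' with hs | hs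
  · rw [hs] at e3
    rw [← e1] at e3
    rcases legendreSym.eq_one_or_neg_one q hu0' with h | h <;> rw [h] at e3 <;> omega
  · have hns : ¬ IsSquare ((p * s : ℤ) : ZMod q) := by
      rw [← legendreSym.eq_neg_one_iff, legendreSym.mul, hlp, hs]; rfl
    have hev : Even v := by
      rcases h2 with h2 | h2
      · exact norm_unram_rat q _ hns u hu v X2 Y2 h2
      · exact norm_unram_rat q _ hns (-u) hu' v X2 Y2 (by rw [← h2]; push_cast; ring)
    rw [hev.neg_one_pow] at e1
    rw [hs, e1] at e3
    simp at e3

lemma no_neg_square (q : ℕ) [Fact q.Prime] (hq : q % 4 = 3) (e : ℤ) (he : ¬ (q : ℤ) ∣ e)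
    (n : ℤ) (hn : n ≠ 0) (X Y : ℚ) (h : ((-n ^ 2 : ℤ) : ℚ) = X ^ 2 - ((q * e : ℤ) : ℚ) * Y ^ 2) : False := by
  have hl : Prime (q : ℤ) := Nat.prime_iff_prime_int.mp (Fact.out)
  obtain ⟨v, u, hu, rfl⟩ := split_val q n hn
  have hm1 : legendreSym q (-1) = -1 := by
    rw [legendreSym.at_neg_one (by rintro rfl; omega)]
    exact ZMod.χ₄_nat_three_mod_four hq
  have hu0' : ((u : ℤ) : ZMod q) ≠ 0 := by
    rw [ne_eq, ZMod.intCast_zmod_eq_zero_iff_dvd]; exact hu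
  have e1 := norm_residue_rat q e he (-1 * u ^ 2) (by
    intro hh
    apply hu
    apply hl.dvd_of_dvd_pow (n := 2)
    simpa using hh) (2 * v) X Y (by rw [← h]; push_cast; ring)
  have hne : legendreSym q (-e) ^ 2 = 1 := by
    apply legendreSym.sq_one
    rw [ne_eq, ZMod.intCast_zmod_eq_zero_iff_dvd, dvd_neg]; exact he
  rw [pow_mul, hne, one_pow, legendreSym.mul, legendreSym.sq_one' q hu0', hm1] at e1
  omega


/-- the genus character on natural numbers -/
noncomputable def psi (p : ℕ) [Fact p.Prime] (n : ℕ) : ℤ := legendreSym p (ordCompl[p] n : ℕ)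

lemma psi_mul (p : ℕ) [Fact p.Prime] (m n : ℕ) : psi p (m * n) = psi p m * psi p n := by
  unfold psi
  rw [Nat.ordCompl_mul, Nat.cast_mul, legendreSym.mul]

lemma psi_pm (p : ℕ) [Fact p.Prime] (n : ℕ) (hn : n ≠ 0) : psi p n = 1 ∨ psi p n = -1 := by
  unfold psi
  apply legendreSym.eq_one_or_neg_one
  rw [ne_eq, ZMod.intCast_zmod_eq_zero_iff_dvd, Int.natCast_dvd_natCast]
  exact Nat.not_dvd_ordCompl Fact.out hn

lemma psi_coprime (p : ℕ) [Fact p.Prime] (n : ℕ) (hn : ¬ p ∣ n) : psi p n = legendreSym p n := by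
  unfold psi
  rw [Nat.factorization_eq_zero_of_not_dvd hn, pow_zero, Nat.div_one]

lemma psi_norm (p : ℕ) [Fact p.Prime] (hp : p % 4 = 1) (e : ℤ) (he : ¬ (p : ℤ) ∣ e)
    (hsq : IsSquare (e : ZMod p)) (n : ℤ) (hn : n ≠ 0) (X Y : ℚ)
    (h : (n : ℚ) = X ^ 2 - ((p * e : ℤ) : ℚ) * Y ^ 2) : psi p n.natAbs = 1 := by
  have hm1 : legendreSym p (-1) = 1 := by
    rw [legendreSym.at_neg_one (by rintro rfl; omega)]
    exact ZMod.χ₄_nat_one_mod_four hp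
  have he0' : ((e : ℤ) : ZMod p) ≠ 0 := by
    rw [ne_eq, ZMod.intCast_zmod_eq_zero_iff_dvd]; exact he
  have hle : legendreSym p (-e) = 1 := by
    rw [show -e = -1 * e by ring, legendreSym.mul, hm1, (legendreSym.eq_one_iff p he0').mpr hsq]; rfl
  obtain ⟨v, u, hu, rfl⟩ := split_val p n hn
  have e1 := norm_residue_rat p e he u hu v X Y h
  rw [hle, one_pow] at e1
  have h2 : ordCompl[p] ((p : ℤ) ^ v * u).natAbs = u.natAbs := by
    have : ((p : ℤ) ^ v * u).natAbs = p ^ v * u.natAbs := by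
      rw [Int.natAbs_mul, Int.natAbs_pow, Int.natAbs_natCast]
    rw [this, Nat.ordCompl_mul]
    have h3 : ordCompl[p] (p ^ v) = 1 := by
      rw [Nat.Prime.factorization_pow Fact.out]
      simp
      exact Nat.div_self (pow_pos (Fact.out : p.Prime).pos _)
    rw [h3, one_mul]
    rw [Nat.factorization_eq_zero_of_not_dvd (by rwa [← Int.natCast_dvd]), pow_zero, Nat.div_one]
  unfold psi
  rw [h2]
  rcases Int.natAbs_eq u with h4 | h4
  · rw [← h4]; exact e1
  · have : ((u.natAbs : ℕ) : ℤ) = -1 * u := by omega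
    rw [this, legendreSym.mul, hm1, e1]; rfl

lemma not_sq_two (p : ℕ) [Fact p.Prime] (hp : p % 8 = 5) : ¬ IsSquare (2 : ZMod p) := by
  rw [ZMod.exists_sq_eq_two_iff (by rintro rfl; omega)]; omega

lemma not_sq_neg_two (p : ℕ) [Fact p.Prime] (hp : p % 8 = 5) : ¬ IsSquare (-2 : ZMod p) := by
  rw [ZMod.exists_sq_eq_neg_two_iff (by rintro rfl; omega)]; omega

lemma psi_two (p : ℕ) [Fact p.Prime] (hp : p % 8 = 5) : psi p 2 = -1 := by
  rw [psi_coprime, legendreSym.eq_neg_one_iff]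
  · exact_mod_cast not_sq_two p hp
  · intro h
    have := Nat.le_of_dvd (by norm_num) h
    omega

lemma sq_of_coprime_pos {a b c : ℤ} (hc : IsCoprime a b) (h : a * b = c ^ 2) (ha : 0 < a) :
    ∃ x, a = x ^ 2 := by
  obtain ⟨x, hx | hx⟩ := Int.sq_of_isCoprime hc h
  · exact ⟨x, hx⟩
  · exfalso; nlinarith [sq_nonneg x]

lemma pell_half (P Q : ℕ) [hP : Fact P.Prime] [hQ : Fact Q.Prime] (hPQ : P ≠ Q)
    (hP2 : P % 2 = 1) (hQ4 : Q % 4 = 3)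
    (h2 : P * Q % 4 = 1 ∨ (P % 8 = 5 ∧ IsSquare (Q : ZMod P))) :
    ∃ a b : ℤ, (P * a ^ 2 - Q * b ^ 2 = 1 ∨ P * a ^ 2 - Q * b ^ 2 = -1) := by
  have hPp : Prime (P : ℤ) := Nat.prime_iff_prime_int.mp hP.out
  have hQp : Prime (Q : ℤ) := Nat.prime_iff_prime_int.mp hQ.out
  have hP0 : (0 : ℤ) < P := by exact_mod_cast hP.out.pos
  have hQ0 : (0 : ℤ) < Q := by exact_mod_cast hQ.out.pos
  have hcopn : Nat.Coprime P Q := (Nat.coprime_primes hP.out hQ.out).mpr hPQ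
  have hcop : IsCoprime (P : ℤ) (Q : ℤ) := Nat.isCoprime_iff_coprime.mpr hcopn
  have hns : ¬ IsSquare ((P * Q : ℕ) : ℤ) := by
    rintro ⟨r, hr⟩
    have h1 : (P : ℤ) ∣ r := by
      have : (P : ℤ) ∣ r * r := ⟨Q, by rw [← hr]; push_cast; ring⟩
      rcases hPp.dvd_or_dvd this with h | h <;> exact h
    obtain ⟨t, rfl⟩ := h1
    have h2 : (Q : ℤ) = P * (t * t) := by
      apply mul_left_cancel₀ hP0.ne'
      push_cast at hr
      linear_combination hr
    have : (P : ℤ) ∣ Q := ⟨_, h2⟩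
    rw [Int.natCast_dvd_natCast, Nat.prime_dvd_prime_iff_eq hP.out hQ.out] at this
    exact hPQ this
  obtain ⟨f, hf⟩ := Pell.IsFundamental.exists_of_not_isSquare
    (d := ((P * Q : ℕ) : ℤ)) (by push_cast; positivity) hns
  have hx1 : 1 < f.x := hf.1
  have hprop := f.prop
  set x := f.x with hx
  set y := f.y with hy
  push_cast at hprop
  have dvd2 : ∀ z : ℤ, (P : ℤ) ∣ z → (Q : ℤ) ∣ z → ∃ w, z = P * Q * w := by
    intro z h1 h2
    exact hcop.mul_dvd h1 h2
  rcases Int.even_or_odd' x with ⟨m, hm | hm⟩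
  · -- even case
    exfalso
    have hd3 : (P * Q) % 4 = 3 := by
      have h3 : ((P : ℤ) * Q * y ^ 2) % 4 = 3 := by
        have : (P : ℤ) * Q * y ^ 2 = 4 * (m ^ 2 - 1) + 3 := by rw [hm] at hprop; linear_combination -hprop
        omega
      rcases Int.even_or_odd' y with ⟨w, hw | hw⟩
      · have : (P : ℤ) * Q * y ^ 2 = 4 * (P * Q * w ^ 2) := by rw [hw]; ring
        omega
      · have : (P : ℤ) * Q * y ^ 2 = 4 * (P * Q * (w ^ 2 + w)) + P * Q := by rw [hw]; ring
        have h4 : ((P : ℤ) * Q) % 4 = 3 := by omega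
        exact_mod_cast h4
    obtain ⟨hP8, hsq⟩ := h2.resolve_left (by omega)
    -- main claim
    have main : ∀ e : ℤ, (e = 1 ∨ e = -1) → (P : ℤ) ∣ x + e → False := by
      intro e he hd
      obtain ⟨a, ha⟩ := hd
      have hxe : 0 < x - e := by rcases he with rfl | rfl <;> omega
      have hxe' : 0 < x + e := by rcases he with rfl | rfl <;> omega
      have ha0 : 0 < a := by
        rw [ha] at hxe'; exact pos_of_mul_pos_right hxe' hP0.le
      have he2 : e ^ 2 = 1 := by rcases he with rfl | rfl <;> norm_num
      have hc0 : IsCoprime (x + e) (x - e) := by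
        exact ⟨m - (x - e), m, by linear_combination (-2 * m - (x - 2 * m) + x - x) * 0 + x * hm * (-1) + he2 + (x - 2 * m) * 0⟩
      have heq : a * (x - e) = Q * y ^ 2 := by
        apply mul_left_cancel₀ hP0.ne'
        linear_combination hprop - (x - e) * ha - he2
      have hca : IsCoprime a (x - e) := by
        rw [ha] at hc0; exact hc0.of_mul_left_right
      have hxz : (((x - e : ℤ)) : ZMod P) = ((-2 * e : ℤ) : ZMod P) := by
        rw [← sub_eq_zero, ← Int.cast_sub, ZMod.intCast_zmod_eq_zero_iff_dvd]
        exact ⟨a, by linear_combination ha⟩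
      have bad : ¬ IsSquare (((x - e : ℤ)) : ZMod P) := by
        rw [hxz]
        rcases he with rfl | rfl
        · simpa using not_sq_neg_two P hP8
        · simpa using not_sq_two P hP8
      rcases hQp.dvd_or_dvd (show (Q : ℤ) ∣ a * (x - e) from ⟨_, heq⟩) with h | h
      · obtain ⟨a', rfl⟩ := h
        have h5 : (x - e) * a' = y ^ 2 := by
          apply mul_left_cancel₀ hQ0.ne'; linear_combination heq
        obtain ⟨c, hc⟩ := sq_of_coprime_pos (hca.of_mul_left_right.symm) h5 hxe
        apply bad
        rw [hc]
        exact ⟨c, by push_cast; ring⟩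
      · obtain ⟨b', hb'⟩ := h
        have h5 : b' * a = y ^ 2 := by
          apply mul_left_cancel₀ hQ0.ne'; rw [hb'] at heq; linear_combination heq
        have hb0 : 0 < b' := by
          rw [hb'] at hxe; exact pos_of_mul_pos_right hxe hQ0.le
        rw [hb'] at hca
        obtain ⟨c, hc⟩ := sq_of_coprime_pos (hca.of_mul_right_right.symm) h5 hb0
        apply bad
        rw [hb', hc]
        push_cast
        exact hsq.mul ⟨c, by ring⟩
    have : (P : ℤ) ∣ (x + 1) * (x + -1) := ⟨Q * y ^ 2, by linear_combination hprop⟩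
    rcases hPp.dvd_or_dvd this with h | h
    · exact main 1 (Or.inl rfl) h
    · exact main (-1) (Or.inr rfl) h
  · -- odd case
    have hm0 : 0 < m := by omega
    have hPQodd : (P * Q) % 2 = 1 := by
      rw [Nat.mul_mod, hP2, show Q % 2 = 1 by omega]
    obtain ⟨w, hw⟩ : ∃ w, y = 2 * w := by
      rcases Int.even_or_odd' y with ⟨w, hw | hw⟩
      · exact ⟨w, hw⟩
      · exfalso
        have h3 : (P : ℤ) * Q * y ^ 2 = 2 * (2 * (m ^ 2 + m)) := by rw [hm] at hprop; linear_combination -hprop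
        have : (P : ℤ) * Q * y ^ 2 = 2 * (2 * (P * Q * (w ^ 2 + w))) + P * Q := by rw [hw]; ring
        have h4 : ((P : ℤ) * Q) % 2 = 1 := by exact_mod_cast hPQodd
        omega
    have hmm : m * (m + 1) = P * Q * w ^ 2 := by
      rw [hm, hw] at hprop
      nlinarith
    have hc0 : IsCoprime m (m + 1) := ⟨-1, 1, by ring⟩
    rcases hPp.dvd_or_dvd (show (P : ℤ) ∣ m * (m + 1) from ⟨Q * w ^ 2, by rw [hmm]; ring⟩) with h1 | h1 <;>
    rcases hQp.dvd_or_dvd (show (Q : ℤ) ∣ m * (m + 1) from ⟨P * w ^ 2, by rw [hmm]; ring⟩) with h3 | h3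
    · exfalso
      obtain ⟨m', hm'⟩ := dvd2 _ h1 h3
      have hm'0 : 0 < m' := by
        rw [hm'] at hm0; exact pos_of_mul_pos_right hm0 (by positivity)
      have h5 : m' * (m + 1) = w ^ 2 := by
        have : (P : ℤ) * Q ≠ 0 := by positivity
        apply mul_left_cancel₀ this
        linear_combination hmm - (m + 1) * hm'
      have hc1 : IsCoprime m' (m + 1) := by
        have := hc0; rw [hm'] at this ⊢; exact this.of_mul_left_right
      obtain ⟨b, hb⟩ := sq_of_coprime_pos hc1 h5 hm'0
      obtain ⟨a, ha⟩ := sq_of_coprime_pos hc1.symm (by rw [mul_comm]; exact h5) (by omega)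
      have ha' : m + 1 = |a| ^ 2 := by rw [sq_abs]; exact ha
      have hal : 1 < |a| := by
        by_contra hcon
        have : |a| ^ 2 ≤ 1 := by
          have := abs_nonneg a
          nlinarith
        omega
      have hle := hf.x_le_x (a := Pell.Solution₁.mk |a| b (by
        push_cast; rw [← ha', ← hb]; linear_combination hm')) (by simpa using hal)
      rw [Pell.Solution₁.x_mk, ← hx] at hle
      nlinarith
    · -- P | m, Q | m+1
      obtain ⟨a', ha'⟩ := h1
      obtain ⟨b', hb'⟩ := h3
      have ha0 : 0 < a' := by rw [ha'] at hm0; exact pos_of_mul_pos_right hm0 hP0.le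
      have hb0 : 0 < b' := by
        have : 0 < m + 1 := by omega
        rw [hb'] at this; exact pos_of_mul_pos_right this hQ0.le
      have h5 : a' * b' = w ^ 2 := by
        have : (P : ℤ) * Q ≠ 0 := by positivity
        apply mul_left_cancel₀ this
        rw [← hmm, hb']; linear_combination -Q * b' * ha'
      have hc1 : IsCoprime a' b' := by
        rw [hb'] at hc0; rw [ha'] at hc0; exact hc0.of_mul_left_right.of_mul_right_right
      obtain ⟨a, ha⟩ := sq_of_coprime_pos hc1 h5 ha0
      obtain ⟨b, hb⟩ := sq_of_coprime_pos hc1.symm (by rw [mul_comm]; exact h5) hb0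
      exact ⟨a, b, Or.inr (by rw [← ha, ← hb, ← ha', ← hb']; ring)⟩
    · obtain ⟨a', ha'⟩ := h1
      obtain ⟨b', hb'⟩ := h3
      have ha0 : 0 < a' := by
        have : 0 < m + 1 := by omega
        rw [ha'] at this; exact pos_of_mul_pos_right this hP0.le
      have hb0 : 0 < b' := by
        rw [hb'] at hm0; exact pos_of_mul_pos_right hm0 hQ0.le
      have h5 : a' * b' = w ^ 2 := by
        have : (P : ℤ) * Q ≠ 0 := by positivity
        apply mul_left_cancel₀ this
        rw [← hmm, ha']; linear_combination -P * a' * hb'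
      have hc1 : IsCoprime a' b' := by
        rw [ha'] at hc0; rw [hb'] at hc0; exact hc0.symm.of_mul_left_right.of_mul_right_right
      obtain ⟨a, ha⟩ := sq_of_coprime_pos hc1 h5 ha0
      obtain ⟨b, hb⟩ := sq_of_coprime_pos hc1.symm (by rw [mul_comm]; exact h5) hb0
      exact ⟨a, b, Or.inl (by rw [← ha, ← hb, ← ha', ← hb']; ring)⟩
    · exfalso
      obtain ⟨m', hm'⟩ := dvd2 _ h1 h3
      have hm'0 : 0 < m' := by
        have : 0 < m + 1 := by omega
        rw [hm'] at this; exact pos_of_mul_pos_right this (by positivity)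
      have h5 : m * m' = w ^ 2 := by
        have : (P : ℤ) * Q ≠ 0 := by positivity
        apply mul_left_cancel₀ this
        linear_combination hmm - m * hm'
      have hc1 : IsCoprime m m' := by
        rw [hm'] at hc0; exact hc0.of_mul_right_right
      obtain ⟨a, ha⟩ := sq_of_coprime_pos hc1 h5 hm0
      have : IsSquare (-1 : ZMod Q) := by
        refine ⟨a, ?_⟩
        have h6 := congrArg (Int.cast : ℤ → ZMod Q) hm'
        rw [ha] at h6
        push_cast at h6
        simp at h6
        linear_combination -h6
      rw [ZMod.exists_sq_eq_neg_one_iff] at this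
      exact this hQ4

lemma padic_lemma (p : ℕ) [Fact p.Prime] (hp : p % 8 = 5) (q : ℤ) (hq : ¬ (p : ℤ) ∣ q)
    (a b c : ℚ_[p]) (hab : a ≠ 0 ∨ b ≠ 0) (h : 2 * (a ^ 2 - p * q * b ^ 2) = c ^ 2) : False := by
  have hp0 : (p : ℝ) > 1 := by exact_mod_cast (Fact.out : p.Prime).one_lt
  have hp00 : (p : ℝ) ≠ 0 := by positivity
  have hinj : ∀ m n : ℤ, (p : ℝ) ^ m = (p : ℝ) ^ n → m = n := fun m n hmn =>
    zpow_right_injective₀ (by linarith) (by linarith) hmn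
  have n2 : ‖(2 : ℚ_[p])‖ = 1 := by
    have := (Padic.norm_natCast_eq_one_iff (p := p) (n := 2)).mpr (by
      rw [Nat.coprime_primes Fact.out Nat.prime_two]; rintro rfl; omega)
    exact_mod_cast this
  have nq : ‖(q : ℚ_[p])‖ = 1 := by
    have := Padic.norm_intCast_lt_one_iff (p := p) (k := q)
    have h1 := Padic.norm_int_le_one (p := p) q
    by_contra hne
    exact hq (this.mp (lt_of_le_of_ne h1 hne))
  have npqb : ‖(p : ℚ_[p]) * q * b ^ 2‖ = (p : ℝ)⁻¹ * ‖b‖ ^ 2 := by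
    rw [norm_mul, norm_mul, norm_pow, nq, Padic.norm_p, mul_one]
  -- parity
  have par : ∀ x y : ℚ_[p], y ≠ 0 → ‖x‖ ^ 2 ≠ (p : ℝ)⁻¹ * ‖y‖ ^ 2 := by
    intro x y hy hxy
    have hx : x ≠ 0 := by
      rintro rfl
      have : 0 < ‖y‖ := norm_pos_iff.mpr hy
      have : 0 < (p : ℝ)⁻¹ * ‖y‖ ^ 2 := by positivity
      rw [← hxy] at this
      simp at this
    rw [Padic.norm_eq_zpow_neg_valuation hx, Padic.norm_eq_zpow_neg_valuation hy] at hxy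
    rw [← zpow_natCast, ← zpow_mul, ← zpow_natCast, ← zpow_mul, ← zpow_neg_one, ← zpow_add₀ hp00] at hxy
    have := hinj _ _ hxy
    push_cast at this
    omega
  have hlt : ‖(p : ℚ_[p]) * q * b ^ 2‖ < ‖a ^ 2‖ := by
    by_cases hb : b = 0
    · subst hb
      have : a ≠ 0 := by simpa using hab
      have : 0 < ‖a‖ := norm_pos_iff.mpr this
      simp
      positivity
    · by_contra hcon
      have hne : ‖a ^ 2‖ ≠ ‖(p : ℚ_[p]) * q * b ^ 2‖ := by
        rw [npqb, norm_pow]; exact par a b hb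
      have hnn : ‖a ^ 2 - (p : ℚ_[p]) * q * b ^ 2‖ = ‖(p : ℚ_[p]) * q * b ^ 2‖ := by
        rw [sub_eq_add_neg, IsUltrametricDist.norm_add_eq_max_of_norm_ne_norm (by rwa [norm_neg]), norm_neg]
        exact max_eq_right (not_lt.mp hcon)
      have := congrArg norm h
      rw [norm_mul, n2, one_mul, hnn, npqb, norm_pow] at this
      exact par c b hb this.symm
  have ha : a ≠ 0 := by
    rintro rfl
    simp at hlt
    exact absurd hlt (not_lt.mpr (by positivity))
  have ht : ‖(p : ℚ_[p]) * q * (b / a) ^ 2‖ < 1 := by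
    have : (p : ℚ_[p]) * q * (b / a) ^ 2 = (p * q * b ^ 2) / a ^ 2 := by field_simp
    rw [this, norm_div, div_lt_one (norm_pos_iff.mpr (pow_ne_zero 2 ha))]
    exact hlt
  have h' : (2 : ℚ_[p]) * (1 - p * q * (b / a) ^ 2) = (c / a) ^ 2 := by
    field_simp
    linear_combination h
  have hn1 : ‖(1 : ℚ_[p]) - p * q * (b / a) ^ 2‖ = 1 := by
    rw [sub_eq_add_neg, IsUltrametricDist.norm_add_eq_max_of_norm_ne_norm (by
      rw [norm_neg, norm_one]; exact ht.ne'), norm_neg, norm_one]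
    exact max_eq_left ht.le
  have hc1 : ‖c / a‖ ≤ 1 := by
    have := congrArg norm h'
    rw [norm_mul, n2, hn1, norm_pow] at this
    nlinarith [norm_nonneg (c / a)]
  let t : ℤ_[p] := ⟨_, ht.le⟩
  let d : ℤ_[p] := ⟨_, hc1⟩
  have htd : (2 : ℤ_[p]) * (1 - t) = d ^ 2 := by
    apply Subtype.ext
    change (((2 : ℤ_[p]) * (1 - t) : ℤ_[p]) : ℚ_[p]) = ((d ^ 2 : ℤ_[p]) : ℚ_[p])
    rw [PadicInt.coe_mul, PadicInt.coe_sub, PadicInt.coe_one, PadicInt.coe_pow]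
    exact h'
  have ht0 : PadicInt.toZMod t = 0 := by
    rw [← RingHom.mem_ker, PadicInt.ker_toZMod, IsLocalRing.mem_maximalIdeal, PadicInt.mem_nonunits]
    exact ht
  have := congrArg (PadicInt.toZMod (p := p)) htd
  simp only [map_mul, map_sub, map_one, map_pow, ht0, map_ofNat] at this
  exact not_sq_two p hp ⟨PadicInt.toZMod d, by linear_combination this⟩

lemma padic_sq (p : ℕ) [Fact p.Prime] (hp : p % 2 = 1) (n : ℤ) (hn : ¬ (p : ℤ) ∣ n)
    (hsq : IsSquare (n : ZMod p)) : IsSquare (n : ℚ_[p]) := by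
  obtain ⟨y, hy⟩ := hsq
  obtain ⟨x0, rfl⟩ := ZMod.intCast_surjective y
  have hd : (p : ℤ) ∣ x0 ^ 2 - n := by
    rw [← ZMod.intCast_zmod_eq_zero_iff_dvd]; push_cast; rw [hy]; ring
  have hl : Prime (p : ℤ) := Nat.prime_iff_prime_int.mp (Fact.out)
  have hx0 : ¬ (p : ℤ) ∣ 2 * x0 := by
    intro hh
    rcases hl.dvd_or_dvd hh with h1 | h1
    · have := Int.le_of_dvd (by norm_num) h1
      have := (Fact.out : p.Prime).two_le
      omega
    · apply hn
      have : n = x0 * x0 - (x0 ^ 2 - n) := by ring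
      rw [this]
      exact dvd_sub (h1.mul_right _) hd
  have n1 : ‖((2 * x0 : ℤ) : ℤ_[p])‖ = 1 := by
    have h1 := PadicInt.norm_le_one ((2 * x0 : ℤ) : ℤ_[p])
    by_contra hne
    exact hx0 ((PadicInt.norm_int_lt_one_iff_dvd _).mp (lt_of_le_of_ne h1 hne))
  have n2 : ‖((x0 ^ 2 - n : ℤ) : ℤ_[p])‖ < 1 := (PadicInt.norm_int_lt_one_iff_dvd _).mpr hd
  obtain ⟨z, hz, -⟩ := hensels_lemma (p := p) (F := (Polynomial.X ^ 2 - Polynomial.C (n : ℤ_[p])))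
    (a := (x0 : ℤ_[p])) (by
      simp [Polynomial.derivative_pow]
      push_cast at n1 n2
      simp at n1
      simp [n1]
      exact n2)
  refine ⟨(z : ℚ_[p]), ?_⟩
  simp at hz
  have h3 : ((z ^ 2 - (n : ℤ_[p]) : ℤ_[p]) : ℚ_[p]) = 0 := by rw [hz]; rfl
  push_cast at h3
  linear_combination -h3


section quad
variable {K L : Type*} [Field K] [Field L] [Algebra K L] [CharZero L]

lemma quad_decomp (h2 : Module.finrank K L = 2) (τ : L ≃ₐ[K] L) (δ : L) (hδ : δ ≠ 0)
    (hτ : τ δ = -δ) (w : L) : ∃ a b : K, w = algebraMap K L a + algebraMap K L b * δ := by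
  have hli : LinearIndependent K ![(1 : L), δ] := by
    rw [LinearIndependent.pair_iff]
    intro s t hst
    have h1 := congrArg τ hst
    simp only [Algebra.smul_def] at hst h1
    simp only [map_add, map_mul, map_one, hτ, map_zero, AlgEquiv.commutes] at h1
    have h3 : algebraMap K L s = 0 := by linear_combination (hst + h1) / 2
    have h4 : algebraMap K L t * δ = 0 := by linear_combination (hst - h1) / 2
    refine ⟨by simpa using h3, ?_⟩
    rcases mul_eq_zero.mp h4 with h5 | h5
    · simpa using h5
    · exact absurd h5 hδ
  have hsp : Submodule.span K (Set.range ![(1 : L), δ]) = ⊤ := by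
    have : FiniteDimensional K L := Module.finite_of_finrank_eq_succ h2
    exact hli.span_eq_top_of_card_eq_finrank' (by simp [h2])
  have hw : w ∈ Submodule.span K (Set.range ![(1 : L), δ]) := by rw [hsp]; trivial
  rw [Matrix.range_cons, Matrix.range_cons, Matrix.range_empty, Set.union_empty,
    Set.singleton_union, Submodule.mem_span_pair] at hw
  obtain ⟨a, b, h⟩ := hw
  refine ⟨a, b, ?_⟩
  rw [← h, Algebra.smul_def, Algebra.smul_def, mul_one]

lemma quad_fixed (h2 : Module.finrank K L = 2) (τ : L ≃ₐ[K] L) (δ : L) (hδ : δ ≠ 0)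
    (hτ : τ δ = -δ) (w : L) (hw : τ w = w) : ∃ a : K, w = algebraMap K L a := by
  obtain ⟨a, b, h⟩ := quad_decomp h2 τ δ hδ hτ w
  refine ⟨a, ?_⟩
  rw [h] at hw ⊢
  simp only [map_add, map_mul, AlgEquiv.commutes, hτ] at hw
  linear_combination -hw / 2

lemma quad_invol (h2 : Module.finrank K L = 2) (τ : L ≃ₐ[K] L) (δ : L) (hδ : δ ≠ 0)
    (hτ : τ δ = -δ) (w : L) : τ (τ w) = w := by
  obtain ⟨a, b, h⟩ := quad_decomp h2 τ δ hδ hτ w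
  rw [h]
  simp only [map_add, map_mul, AlgEquiv.commutes, hτ, map_neg, neg_neg]

lemma quad_norm (h2 : Module.finrank K L = 2) (τ : L ≃ₐ[K] L) (δ : L) (hδ : δ ≠ 0)
    (hτ : τ δ = -δ) (w : L) : algebraMap K L (Algebra.norm K w) = w * τ w := by
  classical
  have : FiniteDimensional K L := Module.finite_of_finrank_eq_succ h2
  have hne : (1 : L ≃ₐ[K] L) ≠ τ := by
    intro h
    rw [← h] at hτ
    have h3 : δ = -δ := hτ
    exact hδ (by linear_combination h3 / 2)
  obtain ⟨d, hd⟩ := quad_fixed h2 τ δ hδ hτ (δ ^ 2) (by rw [map_pow, hτ]; ring)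
  have hall : ∀ ρ : L ≃ₐ[K] L, ρ = 1 ∨ ρ = τ := by
    intro ρ
    have h3 : (ρ δ - δ) * (ρ δ + δ) = 0 := by
      have : ρ (δ ^ 2) = δ ^ 2 := by rw [hd, AlgEquiv.commutes]
      rw [map_pow] at this
      linear_combination this
    rcases mul_eq_zero.mp h3 with h4 | h4
    · left
      ext w
      obtain ⟨a, b, h⟩ := quad_decomp h2 τ δ hδ hτ w
      rw [h, map_add, map_mul, AlgEquiv.commutes, AlgEquiv.commutes, sub_eq_zero.mp h4]; simp
    · right
      ext w
      obtain ⟨a, b, h⟩ := quad_decomp h2 τ δ hδ hτ w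
      rw [h, map_add, map_mul, AlgEquiv.commutes, AlgEquiv.commutes, eq_neg_of_add_eq_zero_left h4,
        map_add, map_mul, AlgEquiv.commutes, AlgEquiv.commutes, hτ]
  have huniv : (Finset.univ : Finset (L ≃ₐ[K] L)) = {1, τ} := by
    ext ρ; simpa using hall ρ
  have : IsGalois K L := by
    apply IsGalois.of_card_aut_eq_finrank
    rw [h2, Nat.card_eq_fintype_card, Fintype.card, huniv, Finset.card_pair hne]
  rw [Algebra.norm_eq_prod_automorphisms, huniv, Finset.prod_pair hne]
  rfl

end quad

section conj
variable {R S : Type*} [CommRing R] [CommRing S] [Algebra R S] [IsDedekindDomain R]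
  [IsDedekindDomain S] [Module.Finite R S] [Module.IsTorsionFree R S]

lemma conj_norm (h2 : Module.finrank R S = 2) (σ : S ≃ₐ[R] S)
    (hσ : ∀ x, algebraMap R S (Algebra.intNorm R S x) = x * σ x) (I : Ideal S) :
    (Ideal.relNorm R I).map (algebraMap R S) = I * I.map σ := by
  by_cases hI : I = ⊥
  · subst hI; simp [Ideal.map_bot]
  have hle : (Ideal.relNorm R I).map (algebraMap R S) ≤ I * I.map σ := by
    rw [Ideal.map_relNorm, Ideal.span_le]
    rintro _ ⟨x, hx, rfl⟩
    simp only [Function.comp, hσ]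
    exact Ideal.mul_mem_mul hx (Ideal.mem_map_of_mem _ hx)
  obtain ⟨J, hJ⟩ := Ideal.dvd_iff_le.mpr hle
  have h3 := congrArg (Ideal.relNorm R) hJ
  rw [Ideal.relNorm_algebraMap, map_mul, map_mul, Ideal.relNorm_map_algEquiv, h2, ← sq] at h3
  have h4 : Ideal.relNorm R I ^ 2 ≠ 0 := pow_ne_zero 2 (by
    rw [ne_eq, Ideal.zero_eq_bot, Ideal.relNorm_eq_bot_iff]; exact hI)
  have h5 : Ideal.relNorm R J = 1 := by
    have : Ideal.relNorm R I ^ 2 * Ideal.relNorm R J = Ideal.relNorm R I ^ 2 * 1 := by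
      rw [mul_one, ← h3]
    exact mul_left_cancel₀ h4 this
  have h6 := Ideal.relNorm_le_comap R J
  rw [h5, Ideal.one_eq_top, top_le_iff, Ideal.comap_eq_top_iff] at h6
  rw [hJ, h6, Ideal.mul_top]
end conj

section nf
variable {K L : Type*} [Field K] [NumberField K] [Field L] [NumberField L] [Algebra K L]

/-- the automorphism induced on integers -/
noncomputable def oAut {k M : Type*} [Field k] [Field M] [Algebra k M] (τ : M ≃ₐ[k] M) :
    𝓞 M ≃ₐ[𝓞 k] 𝓞 M := RingOfIntegers.mapAlgEquiv τ

@[simp] lemma oAut_coe {k M : Type*} [Field k] [Field M] [Algebra k M] (τ : M ≃ₐ[k] M) (x : 𝓞 M) :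
    algebraMap (𝓞 M) M (oAut τ x) = τ (algebraMap (𝓞 M) M x) := rfl

lemma finrank_O : Module.finrank (𝓞 K) (𝓞 L) = Module.finrank K L :=
  (IsFractionRing.finrank_eq (𝓞 K) K (𝓞 L) L).symm

lemma relNorm_conj (h2 : Module.finrank K L = 2) (τ : L ≃ₐ[K] L) (δ : L) (hδ : δ ≠ 0)
    (hτ : τ δ = -δ) (I : Ideal (𝓞 L)) :
    (Ideal.relNorm (𝓞 K) I).map (algebraMap (𝓞 K) (𝓞 L)) = I * I.map (oAut τ) := by
  apply conj_norm (by rw [finrank_O, h2])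
  intro x
  apply RingOfIntegers.coe_injective
  have h3 := Algebra.algebraMap_intNorm (A := 𝓞 K) (K := K) (L := L) (B := 𝓞 L) x
  have h4 := congrArg (algebraMap K L) h3
  rw [quad_norm h2 τ δ hδ hτ] at h4
  rw [← IsScalarTower.algebraMap_apply, IsScalarTower.algebraMap_apply (𝓞 K) (𝓞 L) L] at h4
  exact h4

lemma absNorm_conj (h2 : Module.finrank ℚ K = 2) (τ : K ≃ₐ[ℚ] K) (δ : K) (hδ : δ ≠ 0)
    (hτ : τ δ = -δ) (I : Ideal (𝓞 K)) :
    Ideal.span {((Ideal.absNorm I : ℕ) : 𝓞 K)} = I * I.map (oAut τ) := by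
  have h1 : Module.finrank ℤ (𝓞 K) = 2 := by rw [RingOfIntegers.rank, h2]
  have := conj_norm (R := ℤ) (S := 𝓞 K) h1 (RingOfIntegers.mapRingEquiv τ.toRingEquiv).toIntAlgEquiv ?_ I
  · rw [Ideal.relNorm_int, Ideal.map_span, Set.image_singleton] at this
    simp only [algebraMap_int_eq, eq_intCast, Int.cast_natCast] at this
    rw [this]
    rfl
  intro x
  apply RingOfIntegers.coe_injective
  have h3 := Algebra.algebraMap_intNorm (A := ℤ) (K := ℚ) (L := K) (B := 𝓞 K) x
  have h4 := congrArg (algebraMap ℚ K) h3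
  rw [quad_norm h2 τ δ hδ hτ] at h4
  rw [← IsScalarTower.algebraMap_apply, IsScalarTower.algebraMap_apply ℤ (𝓞 K) K] at h4
  exact h4

end nf


lemma red_step {O : Type*} [CommRing O] (σ : O →+* O) (hσ : ∀ w, σ (σ w) = w) (r D : ℤ) (y : O)
    (hy : (y - σ y) ^ 2 = (D : O)) (hcop : IsCoprime r D)
    (hfix : ∀ t, σ t = t → (r : O) ∣ t ^ 3 → (r : O) ∣ t) (w : O) (hw : (r : O) ∣ w ^ 2) :
    (r : O) ∣ w := by
  have tr : ∀ v : O, (r : O) ∣ v ^ 2 → (r : O) ∣ v + σ v := by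
    intro v hv
    have hv' : (r : O) ∣ (σ v) ^ 2 := by
      have := map_dvd σ hv
      rwa [map_intCast, map_pow] at this
    apply hfix
    · rw [map_add, hσ, add_comm]
    · have : (v + σ v) ^ 3 = v ^ 2 * (v + 3 * σ v) + (σ v) ^ 2 * (3 * v + σ v) := by ring
      rw [this]
      exact dvd_add (hv.mul_right _) (hv'.mul_right _)
  have h1 := tr w hw
  have h2 := tr (w * y) (by rw [mul_pow]; exact hw.mul_right _)
  rw [map_mul] at h2
  have h3 : (r : O) ∣ w * D := by
    have : w * D = ((w * y + σ w * σ y) - σ y * (w + σ w)) * (y - σ y) := by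
      rw [← hy]; ring
    rw [this]
    exact (dvd_sub h2 (h1.mul_left _)).mul_right _
  obtain ⟨a, b, hab⟩ := hcop
  have h4 : w = (r : O) * (a * w) + b * (w * D) := by
    have : ((a * r + b * D : ℤ) : O) = 1 := by rw [hab]; simp
    push_cast at this
    linear_combination -w * this
  rw [h4]
  exact dvd_add (dvd_mul_right _ _) (h3.mul_left _)

lemma gamma_gen {O : Type*} [CommRing O] (x : O) (P Q : ℤ) (hx : x ^ 2 = (P : O) * Q) (a b : ℤ)
    (h : P * a ^ 2 - Q * b ^ 2 = 1 ∨ P * a ^ 2 - Q * b ^ 2 = -1) :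
    (∃ γ : O, Ideal.span {γ} ^ 2 = Ideal.span {(P : O)}) ∧
    (∃ γ : O, Ideal.span {γ} ^ 2 = Ideal.span {(Q : O)}) := by
  have hN : ((P : O) * a ^ 2 - Q * b ^ 2) ^ 2 = 1 := by
    rcases h with h | h
    · have := congrArg (fun z : ℤ => (z : O)) h
      push_cast at this
      rw [this]; ring
    · have := congrArg (fun z : ℤ => (z : O)) h
      push_cast at this
      rw [this]; ring
  have hu : ((P : O) * a ^ 2 + Q * b ^ 2 + 2 * a * b * x) * ((P : O) * a ^ 2 + Q * b ^ 2 - 2 * a * b * x) = 1 := by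
    linear_combination hN - 4 * a ^ 2 * b ^ 2 * hx
  have hunit : IsUnit ((P : O) * a ^ 2 + Q * b ^ 2 + 2 * a * b * x) := IsUnit.of_mul_eq_one _ hu
  constructor
  · refine ⟨P * a + b * x, ?_⟩
    rw [Ideal.span_singleton_pow]
    have : ((P : O) * a + b * x) ^ 2 = P * ((P : O) * a ^ 2 + Q * b ^ 2 + 2 * a * b * x) := by
      linear_combination b ^ 2 * hx
    rw [this, Ideal.span_singleton_mul_right_unit hunit]
  · refine ⟨Q * b + a * x, ?_⟩
    rw [Ideal.span_singleton_pow]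
    have : ((Q : O) * b + a * x) ^ 2 = Q * ((P : O) * a ^ 2 + Q * b ^ 2 + 2 * a * b * x) := by
      linear_combination a ^ 2 * hx
    rw [this, Ideal.span_singleton_mul_right_unit hunit]

lemma two_ideal {O : Type*} [CommRing O] (x : O) (d : ℤ) (hx : x ^ 2 = (d : O)) (hd : d % 4 = 3) :
    (Ideal.span {(2 : O), 1 + x}) ^ 2 = Ideal.span {(2 : O)} := by
  obtain ⟨k, rfl⟩ : ∃ k : ℤ, d = 4 * k + 3 := ⟨d / 4, by omega⟩
  push_cast at hx
  apply le_antisymm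
  · rw [sq, Ideal.span_mul_span', Ideal.span_le]
    intro w hw
    rw [Set.mem_mul] at hw
    obtain ⟨u, hu, v, hv, rfl⟩ := hw
    simp only [Set.mem_insert_iff, Set.mem_singleton_iff] at hu hv
    rw [SetLike.mem_coe, Ideal.mem_span_singleton]
    rcases hu with rfl | rfl
    · exact dvd_mul_right _ _
    · rcases hv with rfl | rfl
      · exact dvd_mul_left _ _
      · exact ⟨2 * k + 2 + x, by linear_combination hx⟩
  · rw [Ideal.span_singleton_le_iff_mem]
    have m2 : (2 : O) ∈ Ideal.span {(2 : O), 1 + x} := Ideal.subset_span (by simp)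
    have mx : (1 + x : O) ∈ Ideal.span {(2 : O), 1 + x} := Ideal.subset_span (by simp)
    have : (2 : O) = 2 * (1 + x) - (1 + x) * (1 + x) + (k + 1) * (2 * 2) := by
      linear_combination hx
    rw [sq]
    refine (congrArg (· ∈ Ideal.span {(2 : O), 1 + x} * Ideal.span {(2 : O), 1 + x}) this).mpr ?_
    exact add_mem (sub_mem (Ideal.mul_mem_mul m2 mx) (Ideal.mul_mem_mul mx mx))
      (Ideal.mul_mem_left _ _ (Ideal.mul_mem_mul m2 m2))

lemma sq_dvd_ideal {O : Type*} [CommRing O] [IsDedekindDomain O] {A B : Ideal O}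
    (h : A ^ 2 ∣ B ^ 2) : A ∣ B := by
  exact (UniqueFactorizationMonoid.pow_dvd_pow_iff_dvd two_ne_zero).mp h

lemma sq_inj_ideal {O : Type*} [CommRing O] [IsDedekindDomain O] {A B : Ideal O}
    (h : A ^ 2 = B ^ 2) : A = B :=
  dvd_antisymm (sq_dvd_ideal (dvd_of_eq h)) (sq_dvd_ideal (dvd_of_eq h.symm))

lemma strip {O : Type*} [CommRing O] [IsDedekindDomain O] [CharZero O]
    (hdiv : ∀ r m : ℤ, (r : O) ∣ (m : O) → r ∣ m)
    (e2 : Prop) (W : ℤ → Prop) (W1 : W 1) (Wneg : ∀ m, W m → W (-m))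
    (Wsq : ∀ r m, W m → W (r * (r * m)))
    (H : ∀ r : ℕ, r.Prime → (r = 2 ∧ e2) ∨ (∀ w : O, (((r : ℤ) : O) ∣ w ^ 2 → ((r : ℤ) : O) ∣ w)) ∨
      ((∃ γ : O, Ideal.span {γ} ^ 2 = Ideal.span {((r : ℤ) : O)}) ∧ ∀ m, W m → W (r * m)))
    (n : ℕ) : ∀ m : ℤ, m.natAbs = n → m ≠ 0 → ∀ B : Ideal O, B ^ 2 = Ideal.span {(m : O)} →
      (∃ g, B = Ideal.span {g} ∧ W m) ∨
      (e2 ∧ ∃ g B0, B = Ideal.span {g} * B0 ∧ B0 ^ 2 = Ideal.span {(2 : O)}) := by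
  induction n using Nat.strong_induction_on with
  | _ n ih =>
  intro m hmn hm B hB
  -- peeling step
  have peel : ∀ (c : O) (B' : Ideal O) (m' : ℤ), m'.natAbs < m.natAbs → m' ≠ 0 →
      B = Ideal.span {c} * B' → B' ^ 2 = Ideal.span {(m' : O)} → (W m' → W m) →
      (∃ g, B = Ideal.span {g} ∧ W m) ∨
      (e2 ∧ ∃ g B0, B = Ideal.span {g} * B0 ∧ B0 ^ 2 = Ideal.span {(2 : O)}) := by
    intro c B' m' hlt h0 hBB hB' hW
    rcases ih _ (hmn ▸ hlt) m' rfl h0 B' hB' with ⟨g, hg, hw⟩ | ⟨he, g, B0, hg, hB0⟩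
    · left
      refine ⟨c * g, ?_, hW hw⟩
      rw [hBB, hg, Ideal.span_singleton_mul_span_singleton]
    · right
      refine ⟨he, c * g, B0, ?_, hB0⟩
      rw [hBB, hg, ← Ideal.span_singleton_mul_span_singleton, mul_assoc]
  have span_ne : ∀ c : ℤ, c ≠ 0 → Ideal.span {(c : O)} ≠ 0 := by
    intro c hc
    rw [Ideal.zero_eq_bot, ne_eq, Ideal.span_singleton_eq_bot]
    exact_mod_cast hc
  -- square peeling
  have peelsq : ∀ (r m' : ℤ), 1 < r.natAbs → m = r * (r * m') →
      (∃ g, B = Ideal.span {g} ∧ W m) ∨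
      (e2 ∧ ∃ g B0, B = Ideal.span {g} * B0 ∧ B0 ^ 2 = Ideal.span {(2 : O)}) := by
    intro r m' hr hmr
    have hr0 : r ≠ 0 := by rintro rfl; simp at hr
    have hm'0 : m' ≠ 0 := by rintro rfl; simp at hmr; exact hm hmr
    have hspan : Ideal.span {(m : O)} = Ideal.span {(r : O)} ^ 2 * Ideal.span {(m' : O)} := by
      rw [Ideal.span_singleton_pow, Ideal.span_singleton_mul_span_singleton, hmr]
      congr 2; push_cast; ring
    have hd : Ideal.span {(r : O)} ∣ B := sq_dvd_ideal (by rw [hB, hspan]; exact dvd_mul_right _ _)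
    obtain ⟨B', hB'⟩ := hd
    refine peel r B' m' ?_ hm'0 hB' ?_ (fun h => hmr ▸ Wsq r m' h)
    · rw [hmr, Int.natAbs_mul, Int.natAbs_mul]
      have : 0 < m'.natAbs := Int.natAbs_pos.mpr hm'0
      nlinarith [Nat.mul_le_mul hr.le hr.le, mul_pos (lt_trans zero_lt_one hr) this]
    · rw [hspan, hB', mul_pow] at hB
      exact mul_left_cancel₀ (pow_ne_zero 2 (span_ne r hr0)) hB
  by_cases hA : ∃ r : ℕ, r.Prime ∧ (r : ℤ) ∣ m ∧ ¬ (r = 2 ∧ e2)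
  · obtain ⟨r, hr, ⟨m', hm'⟩, hne⟩ := hA
    have hm'0 : m' ≠ 0 := by rintro rfl; simp at hm'; exact hm hm'
    have hr0 : (r : ℤ) ≠ 0 := by exact_mod_cast hr.ne_zero
    have hspan : Ideal.span {(m : O)} = Ideal.span {((r : ℤ) : O)} * Ideal.span {(m' : O)} := by
      rw [Ideal.span_singleton_mul_span_singleton, hm']
      congr 2; push_cast; ring
    rcases H r hr with h | h | ⟨⟨γ, hγ⟩, hW⟩
    · exact absurd h hne
    · have hle : B ≤ Ideal.span {((r : ℤ) : O)} := by
        intro w hw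
        rw [Ideal.mem_span_singleton]
        apply h
        have : w ^ 2 ∈ B ^ 2 := Ideal.pow_mem_pow hw 2
        rw [hB, hspan, Ideal.span_singleton_mul_span_singleton, Ideal.mem_span_singleton] at this
        exact (dvd_mul_right _ _).trans this
      obtain ⟨B', hB'⟩ := Ideal.dvd_iff_le.mpr hle
      have h1 : Ideal.span {((r : ℤ) : O)} * B' ^ 2 = Ideal.span {(m' : O)} := by
        rw [hB', hspan, mul_pow, sq, mul_assoc] at hB
        exact mul_left_cancel₀ (span_ne r hr0) hB
      have h2 : Ideal.span {(m' : O)} ≤ Ideal.span {((r : ℤ) : O)} := by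
        rw [← h1]; exact Ideal.dvd_iff_le.mp (dvd_mul_right _ _)
      rw [Ideal.span_singleton_le_span_singleton] at h2
      obtain ⟨m'', hm''⟩ := hdiv _ _ h2
      exact peelsq r m'' (by simpa using hr.one_lt) (by rw [hm', hm''])
    · have hd : Ideal.span {γ} ∣ B := sq_dvd_ideal (by rw [hB, hspan, hγ]; exact dvd_mul_right _ _)
      obtain ⟨B', hB'⟩ := hd
      refine peel γ B' m' ?_ hm'0 hB' ?_ (fun h => hm' ▸ hW m' h)
      · rw [hm', Int.natAbs_mul, Int.natAbs_natCast]
        have : 0 < m'.natAbs := Int.natAbs_pos.mpr hm'0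
        nlinarith [hr.two_le]
      · rw [hspan, hB', mul_pow, hγ] at hB
        exact mul_left_cancel₀ (span_ne r hr0) hB
  · push Not at hA
    by_cases h1 : m.natAbs = 1
    · left
      have hu : IsUnit (m : O) := by
        rcases Int.natAbs_eq m with h | h <;> rw [h, h1] <;> simp
      refine ⟨1, ?_, ?_⟩
      · rw [Ideal.span_singleton_one]
        rw [Ideal.span_singleton_eq_top.mpr hu] at hB
        rw [eq_top_iff, ← hB]; exact Ideal.pow_le_self two_ne_zero
      · rcases Int.natAbs_eq m with h | h <;> rw [h, h1]
        · exact W1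
        · exact Wneg _ W1
    · obtain ⟨r, hr, hrm⟩ := Nat.exists_prime_and_dvd h1
      obtain ⟨rfl, he⟩ := hA r hr (Int.natCast_dvd.mpr hrm)
      obtain ⟨m', hm'⟩ := (Int.natCast_dvd.mpr hrm : ((2 : ℕ) : ℤ) ∣ m)
      by_cases h2 : m'.natAbs = 1
      · right
        refine ⟨he, 1, B, by simp, ?_⟩
        rw [hB, hm']
        rcases Int.natAbs_eq m' with h | h <;> rw [h, h2] <;> simp
      · obtain ⟨r', hr', hrm'⟩ := Nat.exists_prime_and_dvd h2
        have hd' : (r' : ℤ) ∣ m' := Int.natCast_dvd.mpr hrm'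
        obtain ⟨rfl, _⟩ := hA r' hr' (hm' ▸ hd'.mul_left _)
        obtain ⟨m'', hm''⟩ := hd'
        exact peelsq 2 m'' (by simp) (by rw [hm', hm'']; rfl)


lemma int_div_O {K : Type*} [Field K] [NumberField K] (r m : ℤ) (h : (r : 𝓞 K) ∣ (m : 𝓞 K)) :
    r ∣ m := by
  by_cases hr : r = 0
  · subst hr
    simp at h
    simp [h]
  obtain ⟨c, hc⟩ := h
  have h1 : (algebraMap (𝓞 K) K c) = algebraMap ℚ K ((m : ℚ) / r) := by
    have h2 := congrArg (fun z : 𝓞 K => (algebraMap (𝓞 K) K z)) hc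
    simp only [map_mul, map_intCast] at h2
    have hr' : (r : K) ≠ 0 := by exact_mod_cast hr
    rw [map_div₀, map_intCast, map_intCast, eq_div_iff hr', h2, mul_comm]
  have h2 : IsIntegral ℤ ((m : ℚ) / r) := by
    have h3 := c.isIntegral_coe
    rw [h1] at h3
    exact (isIntegral_algebraMap_iff (algebraMap ℚ K).injective).mp h3
  obtain ⟨k, hk⟩ := IsIntegrallyClosed.isIntegral_iff.mp h2
  refine ⟨k, ?_⟩
  have hr' : (r : ℚ) ≠ 0 := by exact_mod_cast hr
  rw [eq_div_iff hr'] at hk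
  simp only [algebraMap_int_eq, eq_intCast] at hk
  have : ((k * r : ℤ) : ℚ) = (m : ℤ) := by push_cast; exact hk
  have := Int.cast_injective this
  rw [← this, mul_comm]

lemma rat_int_O {K : Type*} [Field K] [NumberField K] (w : 𝓞 K) (a : ℚ)
    (h : (algebraMap (𝓞 K) K w) = algebraMap ℚ K a) : ∃ m : ℤ, w = (m : 𝓞 K) := by
  have h2 : IsIntegral ℤ a := by
    have h3 := w.isIntegral_coe
    rw [h] at h3
    exact (isIntegral_algebraMap_iff (algebraMap ℚ K).injective).mp h3
  obtain ⟨k, hk⟩ := IsIntegrallyClosed.isIntegral_iff.mp h2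
  refine ⟨k, ?_⟩
  apply RingOfIntegers.coe_injective
  rw [h, ← hk]
  simp

lemma principal_of_mul {O : Type*} [CommRing O] [IsDedekindDomain O] (I : Ideal O) (t g : O)
    (ht : t ≠ 0) (h : I * Ideal.span {t} = Ideal.span {g}) : ∃ g', I = Ideal.span {g'} := by
  have h1 : Ideal.span {g} ≤ Ideal.span {t} := by
    rw [← h]; exact Ideal.dvd_iff_le.mp (dvd_mul_left _ _)
  rw [Ideal.span_singleton_le_span_singleton] at h1
  obtain ⟨c, rfl⟩ := h1
  refine ⟨c, ?_⟩
  rw [mul_comm t c, ← Ideal.span_singleton_mul_span_singleton] at h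
  exact mul_right_cancel₀ (by
    rw [Ideal.zero_eq_bot, ne_eq, Ideal.span_singleton_eq_bot]; exact ht) h

/-- data of a quadratic field with radicand `d` -/
structure QF (K : Type*) [Field K] [NumberField K] (d : ℤ) where
  h2 : Module.finrank ℚ K = 2
  τ : K ≃ₐ[ℚ] K
  δ : K
  hδ : δ ≠ 0
  hτ : τ δ = -δ
  hsq : δ ^ 2 = (d : K)

namespace QF
variable {K : Type*} [Field K] [NumberField K] {d : ℤ}

lemma fixed (A : QF K d) (w : 𝓞 K) (h : oAut A.τ w = w) : ∃ m : ℤ, w = (m : 𝓞 K) := by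
  have h1 := congrArg (fun z : 𝓞 K => (algebraMap (𝓞 K) K z)) h
  simp only [oAut_coe] at h1
  obtain ⟨a, ha⟩ := quad_fixed A.h2 A.τ A.δ A.hδ A.hτ (algebraMap (𝓞 K) K w) h1
  exact rat_int_O w a ha

lemma invol (A : QF K d) (w : 𝓞 K) : oAut A.τ (oAut A.τ w) = w := by
  apply RingOfIntegers.coe_injective
  simp only [oAut_coe]
  exact quad_invol A.h2 A.τ A.δ A.hδ A.hτ (algebraMap (𝓞 K) K w)

lemma norm_val (A : QF K d) (w : 𝓞 K) : ∃ m : ℤ, w * oAut A.τ w = (m : 𝓞 K) ∧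
    m.natAbs = Ideal.absNorm (Ideal.span {w}) ∧ ∃ X Y : ℚ, (m : ℚ) = X ^ 2 - (d : ℚ) * Y ^ 2 := by
  obtain ⟨m, hm⟩ := A.fixed (w * oAut A.τ w) (by rw [map_mul, A.invol, mul_comm])
  refine ⟨m, hm, ?_, ?_⟩
  · have h1 := absNorm_conj A.h2 A.τ A.δ A.hδ A.hτ (Ideal.span {w})
    rw [Ideal.map_span, Set.image_singleton, Ideal.span_singleton_mul_span_singleton, hm,
      Ideal.span_singleton_eq_span_singleton] at h1
    have a1 := int_div_O (K := K) (Ideal.absNorm (Ideal.span {w}) : ℤ) m (by exact_mod_cast h1.dvd)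
    have a2 := int_div_O (K := K) m (Ideal.absNorm (Ideal.span {w}) : ℤ) (by exact_mod_cast h1.symm.dvd)
    have := Int.natAbs_eq_of_dvd_dvd a1 a2
    rw [Int.natAbs_natCast] at this
    exact this.symm
  · obtain ⟨X, Y, hXY⟩ := quad_decomp A.h2 A.τ A.δ A.hδ A.hτ (algebraMap (𝓞 K) K w)
    refine ⟨X, Y, ?_⟩
    apply (algebraMap ℚ K).injective
    have h1 := congrArg (fun z : 𝓞 K => (algebraMap (𝓞 K) K z)) hm
    simp only [map_mul, oAut_coe, map_intCast] at h1
    rw [map_intCast, ← h1, hXY]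
    simp only [map_mul, map_add, map_sub, map_pow, AlgEquiv.commutes, A.hτ, map_intCast]
    rw [← A.hsq]; ring

lemma red (A : QF K d) (r : ℕ) (hr : r.Prime) (D : ℤ) (y : 𝓞 K) (hy : (y - oAut A.τ y) ^ 2 = (D : 𝓞 K))
    (hD : ¬ (r : ℤ) ∣ D) (w : 𝓞 K) (hw : ((r : ℤ) : 𝓞 K) ∣ w ^ 2) : ((r : ℤ) : 𝓞 K) ∣ w := by
  refine red_step (oAut A.τ : 𝓞 K →+* 𝓞 K) A.invol r D y hy
    ((Nat.prime_iff_prime_int.mp hr).coprime_iff_not_dvd.mpr hD) ?_ w hw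
  intro t ht h3
  obtain ⟨m, rfl⟩ := A.fixed t ht
  have : (r : ℤ) ∣ m ^ 3 := int_div_O (K := K) _ _ (by push_cast at h3 ⊢; exact h3)
  obtain ⟨c, rfl⟩ := (Nat.prime_iff_prime_int.mp hr).dvd_of_dvd_pow this
  exact ⟨(c : 𝓞 K), by push_cast; rfl⟩

lemma step (A : QF K d) (hneg : ∀ n : ℤ, n ≠ 0 → ∀ X Y : ℚ, ((-n ^ 2 : ℤ) : ℚ) = X ^ 2 - (d : ℚ) * Y ^ 2 → False)
    (I : Ideal (𝓞 K)) (hI : I ≠ ⊥) (α : 𝓞 K) (hα : I ^ 2 = Ideal.span {α}) :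
    ∃ t : 𝓞 K, t ≠ 0 ∧ ∃ m : ℤ, m ≠ 0 ∧ α * t ^ 2 = (m : 𝓞 K) := by
  have hα0 : α ≠ 0 := by
    rintro rfl
    rw [Ideal.span_singleton_zero] at hα
    exact pow_ne_zero 2 hI hα
  obtain ⟨m, hm, hm2, X, Y, hXY⟩ := A.norm_val α
  set n := Ideal.absNorm I with hn
  have hn0 : n ≠ 0 := by rw [hn, ne_eq, Ideal.absNorm_eq_zero_iff]; exact hI
  rw [← hα, map_pow, ← hn] at hm2
  have hmn : m = (n : ℤ) ^ 2 := by
    rcases Int.natAbs_eq m with h | h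
    · rw [h, hm2]; push_cast; rfl
    · exfalso
      rw [h, hm2] at hXY
      exact hneg n (by exact_mod_cast hn0) X Y (by push_cast at hXY ⊢; exact hXY)
  rw [hmn] at hm
  push_cast at hm
  by_cases ht : (n : 𝓞 K) + oAut A.τ α = 0
  · refine ⟨1, one_ne_zero, -(n : ℤ), by simpa using hn0, ?_⟩
    have h1 : oAut A.τ α = -(n : 𝓞 K) := (eq_neg_of_add_eq_zero_right ht)
    have h2 := congrArg (oAut A.τ) h1
    rw [A.invol, map_neg, map_natCast] at h2
    rw [h2]; push_cast; ring
  · have hfix : oAut A.τ (α * ((n : 𝓞 K) + oAut A.τ α) ^ 2) = α * ((n : 𝓞 K) + oAut A.τ α) ^ 2 := by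
      simp only [map_mul, map_pow, map_add, map_natCast, A.invol]
      linear_combination (α - oAut A.τ α) * hm
    obtain ⟨m', hm'⟩ := A.fixed _ hfix
    refine ⟨_, ht, m', ?_, hm'⟩
    rintro rfl
    rw [Int.cast_zero] at hm'
    exact mul_ne_zero hα0 (pow_ne_zero 2 ht) hm'

lemma absNorm_two (A : QF K d) : Ideal.absNorm (Ideal.span {(2 : 𝓞 K)}) = 4 := by
  obtain ⟨m, hm, hm2, _⟩ := A.norm_val 2
  have : m = 4 := by
    rw [map_ofNat] at hm
    have : ((4 : ℤ) : 𝓞 K) = (m : 𝓞 K) := by rw [← hm]; norm_num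
    exact_mod_cast this.symm
  rw [← hm2, this]; rfl

lemma psi_span (A : QF K d) (p : ℕ) [Fact p.Prime]
    (hψ : ∀ n : ℤ, n ≠ 0 → ∀ X Y : ℚ, (n : ℚ) = X ^ 2 - (d : ℚ) * Y ^ 2 → psi p n.natAbs = 1)
    (g : 𝓞 K) (hg : g ≠ 0) : psi p (Ideal.absNorm (Ideal.span {g})) = 1 := by
  obtain ⟨m, hm, hm2, X, Y, hXY⟩ := A.norm_val g
  rw [← hm2]
  refine hψ m ?_ X Y hXY
  rintro rfl
  rw [Int.cast_zero] at hm
  exact mul_ne_zero hg (by simpa using hg) hm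

lemma main (A : QF K d) (hneg : ∀ n : ℤ, n ≠ 0 → ∀ X Y : ℚ, ((-n ^ 2 : ℤ) : ℚ) = X ^ 2 - (d : ℚ) * Y ^ 2 → False)
    (p : ℕ) [Fact p.Prime] (hp : p % 8 = 5) (e2 : Prop)
    (hψ : e2 → ∀ n : ℤ, n ≠ 0 → ∀ X Y : ℚ, (n : ℚ) = X ^ 2 - (d : ℚ) * Y ^ 2 → psi p n.natAbs = 1)
    (hS : ∀ m : ℤ, m ≠ 0 → ∀ B : Ideal (𝓞 K), B ^ 2 = Ideal.span {(m : 𝓞 K)} →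
      (∃ g, B = Ideal.span {g}) ∨
      (e2 ∧ ∃ g B0, B = Ideal.span {g} * B0 ∧ B0 ^ 2 = Ideal.span {(2 : 𝓞 K)}))
    (k : ℕ) : ∀ (I : Ideal (𝓞 K)), I ≠ ⊥ → (e2 → psi p (Ideal.absNorm I) = 1) →
      (∃ g, I ^ (2 ^ k) = Ideal.span {g}) → ∃ g, I = Ideal.span {g} := by
  induction k with
  | zero => intro I _ _ h; simpa using h
  | succ k ih =>
    intro I hI hψI h
    obtain ⟨α, hα⟩ : ∃ g, I ^ 2 = Ideal.span {g} := by
      apply ih (I ^ 2) (pow_ne_zero 2 hI)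
      · intro he
        rw [map_pow, sq, psi_mul, hψI he, one_mul]
      · obtain ⟨g, hg⟩ := h
        exact ⟨g, by rw [← pow_mul, ← hg, pow_succ, mul_comm]⟩
    obtain ⟨t, ht, m, hm, hmt⟩ := A.step hneg I hI α hα
    rcases hS m hm (I * Ideal.span {t}) (by
      rw [mul_pow, hα, Ideal.span_singleton_pow, Ideal.span_singleton_mul_span_singleton, hmt])
      with ⟨g, hg⟩ | ⟨he, g, B0, hg, hB0⟩
    · exact principal_of_mul I t g ht hg
    · exfalso
      have hg0 : g ≠ 0 := by
        rintro rfl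
        rw [Ideal.span_singleton_zero, Ideal.bot_mul, ← Ideal.zero_eq_bot, mul_eq_zero,
          Ideal.zero_eq_bot, Ideal.span_singleton_eq_bot] at hg
        tauto
      have h1 := congrArg (fun J => psi p (Ideal.absNorm J)) hg
      simp only [map_mul, psi_mul] at h1
      have h2 : Ideal.absNorm B0 = 2 := by
        have := congrArg Ideal.absNorm hB0
        rw [A.absNorm_two, map_pow] at this
        nlinarith
      rw [hψI he, A.psi_span p (hψ he) t ht, A.psi_span p (hψ he) g hg0, h2, psi_two p hp] at h1
      norm_num at h1

lemma unit_sq (A : QF K d) (hneg : ∀ n : ℤ, n ≠ 0 → ∀ X Y : ℚ, ((-n ^ 2 : ℤ) : ℚ) = X ^ 2 - (d : ℚ) * Y ^ 2 → False)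
    {Q : Type*} [Field Q] [CharZero Q] (φ : K →+* Q)
    (hS : ∀ m : ℤ, m ≠ 0 → ∀ B : Ideal (𝓞 K), B ^ 2 = Ideal.span {(m : 𝓞 K)} → IsSquare (m : Q))
    (u : 𝓞 K) (hu : IsUnit u) : IsSquare (φ (algebraMap (𝓞 K) K u)) := by
  obtain ⟨t, ht, m, hm, hmt⟩ := A.step hneg ⊤ top_ne_bot u (by
    rw [Ideal.span_singleton_eq_top.mpr hu, ← Ideal.one_eq_top, one_pow])
  obtain ⟨c, hc⟩ := hS m hm (Ideal.span {t}) (by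
    rw [Ideal.span_singleton_pow, ← hmt, Ideal.span_singleton_mul_left_unit hu])
  have h1 := congrArg (fun z : 𝓞 K => φ (algebraMap (𝓞 K) K z)) hmt
  simp only [map_mul, map_pow, map_intCast] at h1
  have ht0 : φ (algebraMap (𝓞 K) K t) ≠ 0 := by
    rw [map_ne_zero]; simpa using ht
  refine ⟨c / φ (algebraMap (𝓞 K) K t), ?_⟩
  field_simp
  rw [h1, hc]; ring
end QF


lemma lift_O {K : Type*} [Field K] [NumberField K] (a : K) (h : IsIntegral ℤ a) :
    ∃ x : 𝓞 K, algebraMap (𝓞 K) K x = a := ⟨⟨a, h⟩, rfl⟩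

namespace QF
variable {K : Type*} [Field K] [NumberField K]

lemma exists_x {d : ℤ} (A : QF K d) : ∃ x : 𝓞 K, algebraMap (𝓞 K) K x = A.δ ∧ x ^ 2 = (d : 𝓞 K) ∧
    oAut A.τ x = -x := by
  have hi : IsIntegral ℤ A.δ := by
    apply IsIntegral.of_pow (n := 2) (by norm_num)
    rw [A.hsq]
    exact isIntegral_algebraMap (R := ℤ) (x := d)
  obtain ⟨x, hx⟩ := lift_O A.δ hi
  refine ⟨x, hx, ?_, ?_⟩
  · apply RingOfIntegers.coe_injective
    rw [map_pow, map_intCast, hx]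
    exact A.hsq
  · apply RingOfIntegers.coe_injective
    rw [oAut_coe, map_neg, hx]
    exact A.hτ

lemma not_dvd_of_ne {r q : ℕ} (hr : r.Prime) (hq : q.Prime) (h : r ≠ q) : ¬ (r : ℤ) ∣ (q : ℤ) := by
  intro hd
  exact h ((Nat.prime_dvd_prime_iff_eq hr hq).mp (Int.natCast_dvd_natCast.mp hd))

lemma main12 {p q : ℕ} [Fact p.Prime] [Fact q.Prime] (A : QF K ((p : ℤ) * q)) (hp : p % 8 = 5)
    (hq : q % 4 = 3) (hsq : IsSquare (q : ZMod p)) (k : ℕ) (I : Ideal (𝓞 K)) (hI : I ≠ ⊥)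
    (hψ : psi p (Ideal.absNorm I) = 1) (hg : ∃ g, I ^ (2 ^ k) = Ideal.span {g}) :
    ∃ g, I = Ideal.span {g} := by
  have hpp : p.Prime := Fact.out
  have hqp : q.Prime := Fact.out
  have hpq : p ≠ q := by rintro rfl; omega
  obtain ⟨x, hx1, hx2, hx3⟩ := A.exists_x
  obtain ⟨a, b, hab⟩ := pell_half p q hpq (by omega) hq (Or.inr ⟨hp, hsq⟩)
  obtain ⟨g1, g2⟩ := gamma_gen x p q (by rw [hx2]; push_cast; ring) a b hab
  refine A.main ?_ p hp True ?_ ?_ k I hI (fun _ => hψ) hg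
  · intro n hn X Y h
    exact no_neg_square q hq p (not_dvd_of_ne hqp hpp hpq.symm) n hn X Y (by
      rw [h]; push_cast; ring)
  · intro _ n hn X Y h
    exact psi_norm p (by omega) q (not_dvd_of_ne hpp hqp hpq) (by exact_mod_cast hsq) n hn X Y h
  · intro m hm B hB
    have := strip (O := 𝓞 K) int_div_O True (fun _ => True) trivial (fun _ _ => trivial)
      (fun _ _ _ => trivial) ?_ _ m rfl hm B hB
    · simpa using this
    · intro r hr
      by_cases h2 : r = 2
      · left; exact ⟨h2, trivial⟩
      right
      by_cases h3 : r = p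
      · right; subst h3; exact ⟨g1, fun _ _ => trivial⟩
      by_cases h4 : r = q
      · right; subst h4; exact ⟨g2, fun _ _ => trivial⟩
      left
      refine A.red r hr (4 * (p * q)) x ?_ ?_
      · rw [hx3]; push_cast at hx2 ⊢; linear_combination 4 * hx2
      · intro hd
        have hrp := Nat.prime_iff_prime_int.mp hr
        rcases hrp.dvd_or_dvd hd with h5 | h5
        · have : (r : ℤ) ∣ 2 := hrp.dvd_of_dvd_pow (show (r : ℤ) ∣ 2 ^ 2 by norm_num; exact h5)
          exact not_dvd_of_ne hr Nat.prime_two h2 (by exact_mod_cast this)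
        · rcases hrp.dvd_or_dvd h5 with h6 | h6
          · exact not_dvd_of_ne hr hpp h3 h6
          · exact not_dvd_of_ne hr hqp h4 h6

lemma strip3 {q s : ℕ} [Fact q.Prime] [Fact s.Prime] (A : QF K ((q : ℤ) * s)) (hqs : q ≠ s)
    (hq : q % 4 = 3) (hs : s % 4 = 3) (W : ℤ → Prop) (W1 : W 1) (Wneg : ∀ m, W m → W (-m))
    (Wsq : ∀ r m, W m → W (r * (r * m))) (Wq : ∀ m, W m → W (q * m)) (Ws : ∀ m, W m → W (s * m))
    (m : ℤ) (hm : m ≠ 0) (B : Ideal (𝓞 K)) (hB : B ^ 2 = Ideal.span {(m : 𝓞 K)}) :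
    ∃ g, B = Ideal.span {g} ∧ W m := by
  have hsp : s.Prime := Fact.out
  have hqp : q.Prime := Fact.out
  obtain ⟨x, hx1, hx2, hx3⟩ := A.exists_x
  obtain ⟨a, b, hab⟩ := pell_half q s hqs (by omega) hs (Or.inl (by rw [Nat.mul_mod, hq, hs]))
  obtain ⟨g1, g2⟩ := gamma_gen x q s (by rw [hx2]; push_cast; ring) a b hab
  obtain ⟨c, hc⟩ : ∃ c : ℤ, (q : ℤ) * s = 4 * c + 1 := by
    have : q * s % 4 = 1 := by rw [Nat.mul_mod, hq, hs]
    exact ⟨((q * s / 4 : ℕ) : ℤ), by push_cast; have := Nat.div_add_mod (q * s) 4; zify at this; omega⟩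
  obtain ⟨y, hy⟩ : ∃ y : 𝓞 K, 2 * y = 1 + x := by
    have hi : IsIntegral ℤ ((1 + A.δ) / 2) := by
      refine ⟨Polynomial.X ^ 2 - Polynomial.X - Polynomial.C c, ?_, ?_⟩
      · have : (Polynomial.X ^ 2 - Polynomial.X - Polynomial.C c : Polynomial ℤ) =
          Polynomial.X ^ 2 + (-Polynomial.X - Polynomial.C c) := by ring
        rw [this]
        apply Polynomial.monic_X_pow_add
        compute_degree!
      · have h1 := A.hsq
        have h2 := congrArg (fun z : ℤ => (z : K)) hc
        push_cast at h1 h2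
        rw [Polynomial.eval₂_sub, Polynomial.eval₂_sub, Polynomial.eval₂_pow, Polynomial.eval₂_X,
          Polynomial.eval₂_C, algebraMap_int_eq, eq_intCast]
        linear_combination h1 / 4 + h2 / 4
    obtain ⟨y, hy⟩ := lift_O _ hi
    refine ⟨y, ?_⟩
    apply RingOfIntegers.coe_injective
    rw [map_mul, map_add, map_one, hx1, map_ofNat, hy]
    ring
  have hyy : y - oAut A.τ y = x := by
    have h1 := congrArg (oAut A.τ) hy
    rw [map_mul, map_add, map_ofNat, map_one, hx3] at h1
    have : (2 : 𝓞 K) * (y - oAut A.τ y) = 2 * x := by linear_combination hy - h1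
    exact mul_left_cancel₀ two_ne_zero this
  have := strip (O := 𝓞 K) int_div_O False W W1 Wneg Wsq ?_ _ m rfl hm B hB
  · simpa using this
  · intro r hr
    right
    by_cases h3 : r = q
    · right; subst h3; exact ⟨g1, Wq⟩
    by_cases h4 : r = s
    · right; subst h4; exact ⟨g2, Ws⟩
    left
    refine A.red r hr (q * s) y (by rw [hyy, hx2]) ?_
    intro hd
    have hrp := Nat.prime_iff_prime_int.mp hr
    rcases hrp.dvd_or_dvd hd with h6 | h6
    · exact not_dvd_of_ne hr hqp h3 h6
    · exact not_dvd_of_ne hr hsp h4 h6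

lemma neg3 {q s : ℕ} [Fact q.Prime] [Fact s.Prime] (hqs : q ≠ s) (hq : q % 4 = 3) (n : ℤ)
    (hn : n ≠ 0) (X Y : ℚ) (h : ((-n ^ 2 : ℤ) : ℚ) = X ^ 2 - (((q : ℤ) * s : ℤ) : ℚ) * Y ^ 2) : False :=
  no_neg_square q hq s (not_dvd_of_ne Fact.out Fact.out hqs) n hn X Y h

lemma main3 {q s : ℕ} [Fact q.Prime] [Fact s.Prime] (A : QF K ((q : ℤ) * s)) (hqs : q ≠ s)
    (hq : q % 4 = 3) (hs : s % 4 = 3) (p : ℕ) [Fact p.Prime] (hp : p % 8 = 5)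
    (k : ℕ) (I : Ideal (𝓞 K)) (hI : I ≠ ⊥) (hg : ∃ g, I ^ (2 ^ k) = Ideal.span {g}) :
    ∃ g, I = Ideal.span {g} := by
  refine A.main (fun n hn X Y h => neg3 hqs hq n hn X Y h) p hp False (fun h => h.elim) ?_ k I hI
    (fun h => h.elim) hg
  intro m hm B hB
  obtain ⟨g, hg, _⟩ := A.strip3 hqs hq hs (fun _ => True) trivial (fun _ _ => trivial)
    (fun _ _ _ => trivial) (fun _ _ => trivial) (fun _ _ => trivial) m hm B hB
  exact Or.inl ⟨g, hg⟩

lemma unit3 {q s : ℕ} [Fact q.Prime] [Fact s.Prime] (A : QF K ((q : ℤ) * s)) (hqs : q ≠ s)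
    (hq : q % 4 = 3) (hs : s % 4 = 3) (p : ℕ) [Fact p.Prime] (hp : p % 8 = 5) (hpq : p ≠ q)
    (hps : p ≠ s) (hsqq : IsSquare (q : ZMod p)) (hsqs : IsSquare (s : ZMod p))
    (φ : K →+* ℚ_[p]) (u : 𝓞 K) (hu : IsUnit u) : IsSquare (φ (algebraMap (𝓞 K) K u)) := by
  have i1 : IsSquare ((-1 : ℤ) : ℚ_[p]) := by
    apply padic_sq p (by omega)
    · intro h
      have := Int.isUnit_iff.mp (isUnit_of_dvd_unit h (by decide))
      have := (Fact.out : p.Prime).one_lt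
      omega
    · have := (ZMod.exists_sq_eq_neg_one_iff (p := p)).mpr (by omega)
      exact_mod_cast this
  have iq : IsSquare ((q : ℤ) : ℚ_[p]) := padic_sq p (by omega) q
    (not_dvd_of_ne Fact.out Fact.out hpq) (by exact_mod_cast hsqq)
  have is : IsSquare ((s : ℤ) : ℚ_[p]) := padic_sq p (by omega) s
    (not_dvd_of_ne Fact.out Fact.out hps) (by exact_mod_cast hsqs)
  refine A.unit_sq (fun n hn X Y h => neg3 hqs hq n hn X Y h) φ ?_ u hu
  intro m hm B hB
  obtain ⟨g, hg, h⟩ := A.strip3 hqs hq hs (fun m => IsSquare (m : ℚ_[p])) (by simp)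
    (fun m h => by
      have : ((-m : ℤ) : ℚ_[p]) = ((-1 : ℤ) : ℚ_[p]) * m := by push_cast; ring
      rw [this]; exact i1.mul h)
    (fun r m h => by
      have : ((r * (r * m) : ℤ) : ℚ_[p]) = ((r : ℚ_[p]) * r) * m := by push_cast; ring
      rw [this]; exact (IsSquare.mul_self _).mul h)
    (fun m h => by rw [Int.cast_mul]; exact iq.mul h)
    (fun m h => by rw [Int.cast_mul]; exact is.mul h) m hm B hB
  exact h
end QF


/-- quadratic subextension of a field with a quadratic subfield -/
structure SubQ (F K : Type*) [Field F] [NumberField F] [Field K] [NumberField K] [Algebra K F]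
    (d : ℤ) where
  A : QF K d
  hF : Module.finrank K F = 2
  σ : F ≃ₐ[K] F
  ε : F
  hε : ε ≠ 0
  hσ : σ ε = -ε

namespace SubQ
variable {F K : Type*} [Field F] [NumberField F] [Field K] [NumberField K] [Algebra K F] {d : ℤ}

lemma fixed (B : SubQ F K d) (w : 𝓞 F) (h : oAut B.σ w = w) :
    ∃ a : 𝓞 K, w = algebraMap (𝓞 K) (𝓞 F) a := by
  have h1 := congrArg (algebraMap (𝓞 F) F) h
  rw [oAut_coe] at h1
  obtain ⟨a, ha⟩ := quad_fixed B.hF B.σ B.ε B.hε B.hσ _ h1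
  have h2 : IsIntegral ℤ a := by
    have h3 := w.isIntegral_coe
    rw [ha] at h3
    exact (isIntegral_algebraMap_iff (algebraMap K F).injective).mp h3
  obtain ⟨b, hb⟩ := lift_O a h2
  refine ⟨b, ?_⟩
  apply RingOfIntegers.coe_injective
  rw [ha, ← hb]
  rfl

lemma invol (B : SubQ F K d) (w : 𝓞 F) : oAut B.σ (oAut B.σ w) = w := by
  apply RingOfIntegers.coe_injective
  simp only [oAut_coe]
  exact quad_invol B.hF B.σ B.ε B.hε B.hσ _

lemma inj : Function.Injective (algebraMap (𝓞 K) (𝓞 F)) := by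
  intro a b h
  have h1 := congrArg (algebraMap (𝓞 F) F) h
  have h2 : algebraMap K F (algebraMap (𝓞 K) K a) = algebraMap K F (algebraMap (𝓞 K) K b) := h1
  exact RingOfIntegers.coe_injective ((algebraMap K F).injective h2)

lemma descend (B : SubQ F K d) (r : ℤ) (t : 𝓞 K) (h : (r : 𝓞 F) ∣ algebraMap (𝓞 K) (𝓞 F) t) :
    (r : 𝓞 K) ∣ t := by
  by_cases hr : r = 0
  · subst hr
    rw [Int.cast_zero, zero_dvd_iff] at h ⊢
    exact inj (F := F) (by rw [h, map_zero])
  obtain ⟨c, hc⟩ := h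
  have h1 : oAut B.σ c = c := by
    have h2 := congrArg (oAut B.σ) hc
    rw [map_mul, map_intCast, AlgEquiv.commutes, hc] at h2
    exact (mul_left_cancel₀ (by exact_mod_cast hr) h2).symm
  obtain ⟨a, rfl⟩ := B.fixed c h1
  refine ⟨a, inj (F := F) ?_⟩
  rw [hc, map_mul, map_intCast]

lemma red (B : SubQ F K d) (r : ℕ) (hr : r.Prime) (D : ℤ) (y : 𝓞 F)
    (hK : ∀ w : 𝓞 K, ((r : ℤ) : 𝓞 K) ∣ w ^ 2 → ((r : ℤ) : 𝓞 K) ∣ w)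
    (hy : (y - oAut B.σ y) ^ 2 = (D : 𝓞 F))
    (hD : ¬ (r : ℤ) ∣ D) (w : 𝓞 F) (hw : ((r : ℤ) : 𝓞 F) ∣ w ^ 2) : ((r : ℤ) : 𝓞 F) ∣ w := by
  refine red_step (oAut B.σ : 𝓞 F →+* 𝓞 F) B.invol r D y hy
    ((Nat.prime_iff_prime_int.mp hr).coprime_iff_not_dvd.mpr hD) ?_ w hw
  intro t ht h3
  obtain ⟨a, rfl⟩ := B.fixed t ht
  rw [← map_pow] at h3
  have h4 := B.descend _ _ h3
  have h5 : ((r : ℤ) : 𝓞 K) ∣ a := by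
    apply hK; apply hK
    have : (a ^ 2) ^ 2 = a ^ 3 * a := by ring
    rw [this]
    exact h4.mul_right _
  obtain ⟨c, rfl⟩ := h5
  exact ⟨algebraMap _ _ c, by rw [map_mul, map_intCast]⟩

lemma norm_principal (B : SubQ F K d) (I : Ideal (𝓞 F)) (a : 𝓞 K)
    (h : Ideal.relNorm (𝓞 K) I = Ideal.span {a}) :
    I * I.map (oAut B.σ) = Ideal.span {algebraMap (𝓞 K) (𝓞 F) a} := by
  rw [← relNorm_conj B.hF B.σ B.ε B.hε B.hσ, h, Ideal.map_span, Set.image_singleton]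

lemma absNorm_rel (I : Ideal (𝓞 F)) :
    Ideal.absNorm (Ideal.relNorm (𝓞 K) I) = Ideal.absNorm I :=
  Ideal.absNorm_relNorm _ _ _

lemma psi_span (B : SubQ F K d) (p : ℕ) [Fact p.Prime]
    (hψ : ∀ n : ℤ, n ≠ 0 → ∀ X Y : ℚ, (n : ℚ) = X ^ 2 - (d : ℚ) * Y ^ 2 → psi p n.natAbs = 1)
    (g : 𝓞 F) (hg : g ≠ 0) : psi p (Ideal.absNorm (Ideal.span {g})) = 1 := by
  rw [← absNorm_rel (K := K), Ideal.relNorm_singleton]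
  apply B.A.psi_span p hψ
  intro h0
  have h1 := Ideal.relNorm_singleton (𝓞 K) g
  rw [h0, Ideal.span_singleton_zero, Ideal.relNorm_eq_bot_iff, Ideal.span_singleton_eq_bot] at h1
  exact hg h1

end SubQ

/-- compatibility of an automorphism with a quadratic subfield -/
lemma compat {F K L : Type*} [Field F] [NumberField F] [Field K] [NumberField K] [Algebra K F]
    [Field L] [Algebra L F] {d : ℤ} (A : QF K d) (σ : F ≃ₐ[L] F)
    (h : σ (algebraMap K F A.δ) = -algebraMap K F A.δ) (w : 𝓞 K) :
    oAut σ (algebraMap (𝓞 K) (𝓞 F) w) = algebraMap (𝓞 K) (𝓞 F) (oAut A.τ w) := by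
  apply RingOfIntegers.coe_injective
  rw [oAut_coe]
  change σ (algebraMap K F (algebraMap (𝓞 K) K w)) = algebraMap K F (algebraMap (𝓞 K) K (oAut A.τ w))
  rw [oAut_coe]
  obtain ⟨X, Y, hXY⟩ := quad_decomp A.h2 A.τ A.δ A.hδ A.hτ (algebraMap (𝓞 K) K w)
  rw [hXY]
  simp only [map_add, map_mul, h, AlgEquiv.commutes, A.hτ, map_neg]
  simp only [eq_ratCast, map_ratCast]

/-- a biquadratic field -/
structure Biq (F K1 K2 K3 : Type*) [Field F] [NumberField F] [Field K1] [NumberField K1]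
    [Algebra K1 F] [Field K2] [NumberField K2] [Algebra K2 F] [Field K3] [NumberField K3]
    [Algebra K3 F] (p q s : ℕ) where
  B1 : SubQ F K1 ((p : ℤ) * q)
  B2 : SubQ F K2 ((p : ℤ) * s)
  B3 : SubQ F K3 ((q : ℤ) * s)
  h12 : B1.σ (algebraMap K2 F B2.A.δ) = - algebraMap K2 F B2.A.δ
  h13 : B1.σ (algebraMap K3 F B3.A.δ) = - algebraMap K3 F B3.A.δ
  h21 : B2.σ (algebraMap K1 F B1.A.δ) = - algebraMap K1 F B1.A.δ
  h23 : B2.σ (algebraMap K3 F B3.A.δ) = - algebraMap K3 F B3.A.δ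
  h31 : B3.σ (algebraMap K1 F B1.A.δ) = - algebraMap K1 F B1.A.δ
  hcomp : ∀ w, B2.σ (B1.σ w) = B3.σ w

lemma t_sum {O : Type*} [CommRing O] [IsDomain O] [CharZero O] (D a b c : O) (hD : D ≠ 0) :
    ∃ e1 e2 : O, e1 ^ 2 = 1 ∧ e2 ^ 2 = 1 ∧ (∃ k : ℤ, e1 = k) ∧ (∃ k : ℤ, e2 = k) ∧
      D + (e1 * a + e2 * b + e1 * e2 * c) ≠ 0 := by
  by_contra! h
  have z1 := h 1 1 (by ring) (by ring) ⟨1, by simp⟩ ⟨1, by simp⟩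
  have z2 := h 1 (-1) (by ring) (by ring) ⟨1, by simp⟩ ⟨-1, by simp⟩
  have z3 := h (-1) 1 (by ring) (by ring) ⟨-1, by simp⟩ ⟨1, by simp⟩
  have z4 := h (-1) (-1) (by ring) (by ring) ⟨-1, by simp⟩ ⟨-1, by simp⟩
  have : (4 : O) * D = 0 := by linear_combination z1 + z2 + z3 + z4
  rcases mul_eq_zero.mp this with h4 | h4
  · norm_num at h4
  · exact hD h4

lemma t_fix {O : Type*} [CommRing O] [IsDomain O] (N a1 a2 a3 b1 b2 b3 e1 e2 st t : O)
    (h2 : a2 * b2 = N) (h3 : a3 * b3 = N) (n2 : a2 ≠ 0) (n3 : a3 ≠ 0)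
    (he1 : e1 ^ 2 = 1)
    (ht : t = a1 * a2 * a3 + N * (e1 * a1 + e2 * a2 + e1 * e2 * a3))
    (hst : st = a1 * b2 * b3 + N * (e1 * a1 + e2 * b2 + e1 * e2 * b3)) :
    st ^ 2 * (b1 * a2 * a3) = t ^ 2 * (b1 * b2 * b3) := by
  have k1 : st * (a2 * a3) = N * e1 * t := by
    rw [hst, ht]
    subst h3
    linear_combination (a3 * b3 * a1 + a3 ^ 2 * b3 * e2) * h2  - a3 * b3 *(a3*b3*a1 +a3*b3*e2*a3) * he1
  apply mul_left_cancel₀ (mul_ne_zero n2 n3)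
  have : a2 * a3 * (st ^ 2 * (b1 * a2 * a3)) = b1 * (st * (a2 * a3)) ^ 2 := by ring
  rw [this, k1]
  have : a2 * a3 * (t ^ 2 * (b1 * b2 * b3)) = b1 * t ^ 2 * (a2 * b2) * (a3 * b3) := by ring
  rw [this, h2, h3]
  linear_combination b1 * N ^ 2 * t ^ 2 * he1


/-- arithmetic hypotheses -/
structure Hyp (p q s : ℕ) : Prop where
  hp : p % 8 = 5
  hq : q % 4 = 3
  hs : s % 4 = 3
  hqs : q ≠ s
  pq : IsSquare (p : ZMod q)
  ps : IsSquare (p : ZMod s)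
  qp : IsSquare (q : ZMod p)
  sp : IsSquare (s : ZMod p)

lemma not_dvd_four_mul {p q r : ℕ} (hpp : p.Prime) (hqp : q.Prime) (hr : r.Prime) (h2 : r ≠ 2) (h3 : r ≠ p)
    (h4 : r ≠ q) : ¬ (r : ℤ) ∣ 4 * (p * q) := by
  intro hd
  have hrp := Nat.prime_iff_prime_int.mp hr
  rcases hrp.dvd_or_dvd hd with h5 | h5
  · have : (r : ℤ) ∣ 2 := hrp.dvd_of_dvd_pow (show (r : ℤ) ∣ 2 ^ 2 by norm_num; exact h5)
    exact QF.not_dvd_of_ne hr Nat.prime_two h2 (by exact_mod_cast this)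
  · rcases hrp.dvd_or_dvd h5 with h6 | h6
    · exact QF.not_dvd_of_ne hr hpp h3 h6
    · exact QF.not_dvd_of_ne hr hqp h4 h6

lemma map_oAut_comp {F K1 K2 K3 : Type*} [Field F] [Field K1] [Field K2] [Field K3]
    [Algebra K1 F] [Algebra K2 F] [Algebra K3 F] (σ1 : F ≃ₐ[K1] F) (σ2 : F ≃ₐ[K2] F) (σ3 : F ≃ₐ[K3] F)
    (h : ∀ w, σ2 (σ1 w) = σ3 w) (I : Ideal (𝓞 F)) :
    (I.map (oAut σ1)).map (oAut σ2) = I.map (oAut σ3) := by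
  change Ideal.map (oAut σ2 : 𝓞 F →+* 𝓞 F) (Ideal.map (oAut σ1 : 𝓞 F →+* 𝓞 F) I) =
    Ideal.map (oAut σ3 : 𝓞 F →+* 𝓞 F) I
  rw [Ideal.map_map]
  congr 1
  ext w
  exact h _

namespace Biq
variable {F K1 K2 K3 : Type*} [Field F] [NumberField F] [Field K1] [NumberField K1]
    [Algebra K1 F] [Field K2] [NumberField K2] [Algebra K2 F] [Field K3] [NumberField K3]
    [Algebra K3 F] {p q s : ℕ} [Fact p.Prime] [Fact q.Prime] [Fact s.Prime]

lemma stripF (B : Biq F K1 K2 K3 p q s) (H : Hyp p q s) (l : Ideal (𝓞 F)) (hl : l ^ 2 = Ideal.span {2})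
    (m : ℤ) (hm : m ≠ 0) (J : Ideal (𝓞 F)) (hJ : J ^ 2 = Ideal.span {(m : 𝓞 F)}) :
    (∃ g, J = Ideal.span {g}) ∨ ∃ g, J = Ideal.span {g} * l := by
  have hpp : p.Prime := Fact.out
  have hqp : q.Prime := Fact.out
  have hsp : s.Prime := Fact.out
  have hp := H.hp
  have hq := H.hq
  have hs := H.hs
  have hpq : p ≠ q := by rintro rfl; omega
  have hps : p ≠ s := by rintro rfl; omega
  obtain ⟨x, hx1, hx2, hx3⟩ := B.B1.A.exists_x
  obtain ⟨y, hy1, hy2, hy3⟩ := B.B2.A.exists_x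
  obtain ⟨a, b, hab⟩ := pell_half p q hpq (by omega) hq (Or.inr ⟨hp, H.qp⟩)
  obtain ⟨a', b', hab'⟩ := pell_half p s hps (by omega) hs (Or.inr ⟨hp, H.sp⟩)
  have hX : (algebraMap (𝓞 K1) (𝓞 F) x) ^ 2 = ((p : ℤ) : 𝓞 F) * (q : ℤ) := by
    rw [← map_pow, hx2, map_intCast]; push_cast; ring
  have hY : (algebraMap (𝓞 K2) (𝓞 F) y) ^ 2 = ((p : ℤ) : 𝓞 F) * (s : ℤ) := by
    rw [← map_pow, hy2, map_intCast]; push_cast; ring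
  obtain ⟨g1, g2⟩ := gamma_gen _ p q hX a b hab
  obtain ⟨_, g3⟩ := gamma_gen _ p s hY a' b' hab'
  have := strip (O := 𝓞 F) int_div_O True (fun _ => True) trivial (fun _ _ => trivial)
      (fun _ _ _ => trivial) ?_ _ m rfl hm J hJ
  · rcases this with ⟨g, hg, _⟩ | ⟨_, g, B0, hg, hB0⟩
    · exact Or.inl ⟨g, hg⟩
    · right
      rw [← hl] at hB0
      exact ⟨g, by rw [hg, sq_inj_ideal hB0]⟩
  · intro r hr
    by_cases h2 : r = 2
    · left; exact ⟨h2, trivial⟩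
    right
    by_cases h3 : r = p
    · right; subst h3; exact ⟨g1, fun _ _ => trivial⟩
    by_cases h4 : r = q
    · right; subst h4; exact ⟨g2, fun _ _ => trivial⟩
    by_cases h5 : r = s
    · right; subst h5; exact ⟨g3, fun _ _ => trivial⟩
    left
    refine B.B1.red r hr (4 * (p * s)) (algebraMap (𝓞 K2) (𝓞 F) y) ?_ ?_
      (not_dvd_four_mul hpp hsp hr h2 h3 h5)
    · refine B.B1.A.red r hr (4 * (p * q)) x ?_ (not_dvd_four_mul hpp hqp hr h2 h3 h4)
      rw [hx3]; push_cast at hx2 ⊢; linear_combination 4 * hx2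
    · rw [compat B.B2.A B.B1.σ B.h12, hy3, map_neg]
      push_cast at hY ⊢; linear_combination 4 * hY

lemma signs (B : Biq F K1 K2 K3 p q s) (H : Hyp p q s) (n : ℕ) (hn : n ≠ 0) (a1 : 𝓞 K1) (a2 : 𝓞 K2) (a3 : 𝓞 K3)
    (h1 : Ideal.absNorm (Ideal.span {a1}) = n) (h2 : Ideal.absNorm (Ideal.span {a2}) = n)
    (h3 : Ideal.absNorm (Ideal.span {a3}) = n) :
    ∃ N : ℤ, N ≠ 0 ∧ a1 * oAut B.B1.A.τ a1 = (N : 𝓞 K1) ∧ a2 * oAut B.B2.A.τ a2 = (N : 𝓞 K2) ∧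
      a3 * oAut B.B3.A.τ a3 = (N : 𝓞 K3) := by
  have hpp : p.Prime := Fact.out
  have hqp : q.Prime := Fact.out
  have hsp : s.Prime := Fact.out
  have hp := H.hp
  have hq := H.hq
  have hs := H.hs
  have hpq : p ≠ q := by rintro rfl; omega
  have hps : p ≠ s := by rintro rfl; omega
  obtain ⟨N1, e1, f1, X1, Y1, i1⟩ := B.B1.A.norm_val a1
  obtain ⟨N2, e2, f2, X2, Y2, i2⟩ := B.B2.A.norm_val a2
  obtain ⟨N3, e3, f3, X3, Y3, i3⟩ := B.B3.A.norm_val a3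
  rw [h1] at f1; rw [h2] at f2; rw [h3] at f3
  have z1 : N1 ≠ 0 := by omega
  have z2 : N2 ≠ 0 := by omega
  have r12 : N2 = N1 ∨ N2 = -N1 := by omega
  have s1 : N3 = N1 := by
    refine signs_agree q hq p s (by exact_mod_cast H.pq) (QF.not_dvd_of_ne hqp hpp hpq.symm)
      (QF.not_dvd_of_ne hqp hsp H.hqs) N1 z1 N3 (by omega) X1 Y1 X2 Y2 X3 Y3 ?_ ?_ i3
    · rw [i1]; push_cast; ring
    · rcases r12 with h | h
      · left; rw [← h]; exact i2
      · right; rw [← i2, h]; push_cast; rfl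
  have s2 : N3 = N2 := by
    refine signs_agree s hs p q (by exact_mod_cast H.ps) (QF.not_dvd_of_ne hsp hpp hps.symm)
      (QF.not_dvd_of_ne hsp hqp H.hqs.symm) N2 z2 N3 (by omega) X2 Y2 X1 Y1 X3 Y3 ?_ ?_ ?_
    · rw [i2]; push_cast; ring
    · rcases r12 with h | h
      · left; rw [h]; exact i1
      · right; rw [← i1, h]; push_cast; ring
    · rw [i3]; push_cast; ring
  subst s1
  exact ⟨N3, z1, e1, by rw [s2]; exact e2, e3⟩

lemma T1 (B : Biq F K1 K2 K3 p q s) (H : Hyp p q s) (l : Ideal (𝓞 F)) (hl : l ^ 2 = Ideal.span {2})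
    (I : Ideal (𝓞 F)) (hI : I ≠ ⊥) (k : ℕ) (hk : ∃ g, I ^ (2 ^ k) = Ideal.span {g})
    (hψ : psi p (Ideal.absNorm I) = 1) :
    ∃ t : 𝓞 F, t ≠ 0 ∧ ((∃ g, I * Ideal.span {t} = Ideal.span {g}) ∨
      ∃ g, I * Ideal.span {t} = Ideal.span {g} * l) := by
  obtain ⟨g, hg⟩ := hk
  have hn0 : Ideal.absNorm I ≠ 0 := by rwa [ne_eq, Ideal.absNorm_eq_zero_iff]
  obtain ⟨a1, ha1⟩ := B.B1.A.main12 H.hp H.hq H.qp k (Ideal.relNorm (𝓞 K1) I)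
    (by rwa [ne_eq, Ideal.relNorm_eq_bot_iff]) (by rw [SubQ.absNorm_rel]; exact hψ)
    ⟨_, by rw [← map_pow, hg, Ideal.relNorm_singleton]⟩
  obtain ⟨a2, ha2⟩ := B.B2.A.main12 H.hp H.hs H.sp k (Ideal.relNorm (𝓞 K2) I)
    (by rwa [ne_eq, Ideal.relNorm_eq_bot_iff]) (by rw [SubQ.absNorm_rel]; exact hψ)
    ⟨_, by rw [← map_pow, hg, Ideal.relNorm_singleton]⟩
  obtain ⟨a3, ha3⟩ := B.B3.A.main3 H.hqs H.hq H.hs p H.hp k (Ideal.relNorm (𝓞 K3) I)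
    (by rwa [ne_eq, Ideal.relNorm_eq_bot_iff])
    ⟨_, by rw [← map_pow, hg, Ideal.relNorm_singleton]⟩
  obtain ⟨N, hN0, n1, n2, n3⟩ := B.signs H (Ideal.absNorm I) hn0 a1 a2 a3
    (by rw [← ha1, SubQ.absNorm_rel]) (by rw [← ha2, SubQ.absNorm_rel])
    (by rw [← ha3, SubQ.absNorm_rel])
  have p1 := B.B1.norm_principal I a1 ha1
  have p2 := B.B2.norm_principal I a2 ha2
  have p3 := B.B3.norm_principal I a3 ha3
  have S12 := compat B.B2.A B.B1.σ B.h12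
  have S13 := compat B.B3.A B.B1.σ B.h13
  have S21 := compat B.B1.A B.B2.σ B.h21
  have S23 := compat B.B3.A B.B2.σ B.h23
  have m1 := congrArg (algebraMap (𝓞 K1) (𝓞 F)) n1
  have m2 := congrArg (algebraMap (𝓞 K2) (𝓞 F)) n2
  have m3 := congrArg (algebraMap (𝓞 K3) (𝓞 F)) n3
  rw [map_mul, map_intCast] at m1 m2 m3
  have q1 := congrArg (Ideal.map (oAut B.B2.σ)) p1
  rw [Ideal.map_mul, map_oAut_comp _ _ _ B.hcomp, Ideal.map_span, Set.image_singleton, S21] at q1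
  have u11 : oAut B.B1.σ (algebraMap (𝓞 K1) (𝓞 F) a1) = algebraMap (𝓞 K1) (𝓞 F) a1 := AlgEquiv.commutes _ _
  have v11 : oAut B.B1.σ (algebraMap (𝓞 K1) (𝓞 F) (oAut B.B1.A.τ a1)) = algebraMap (𝓞 K1) (𝓞 F) (oAut B.B1.A.τ a1) :=
    AlgEquiv.commutes _ _
  have u22 : oAut B.B2.σ (algebraMap (𝓞 K2) (𝓞 F) a2) = algebraMap (𝓞 K2) (𝓞 F) a2 := AlgEquiv.commutes _ _
  have v22 : oAut B.B2.σ (algebraMap (𝓞 K2) (𝓞 F) (oAut B.B2.A.τ a2)) = algebraMap (𝓞 K2) (𝓞 F) (oAut B.B2.A.τ a2) :=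
    AlgEquiv.commutes _ _
  have u12 := S12 a2
  have v12 := S12 (oAut B.B2.A.τ a2)
  rw [QF.invol] at v12
  have u13 := S13 a3
  have v13 := S13 (oAut B.B3.A.τ a3)
  rw [QF.invol] at v13
  have u21 := S21 a1
  have v21 := S21 (oAut B.B1.A.τ a1)
  rw [QF.invol] at v21
  have u23 := S23 a3
  have v23 := S23 (oAut B.B3.A.τ a3)
  rw [QF.invol] at v23
  generalize algebraMap (𝓞 K1) (𝓞 F) a1 = A1 at *
  generalize algebraMap (𝓞 K2) (𝓞 F) a2 = A2 at *
  generalize algebraMap (𝓞 K3) (𝓞 F) a3 = A3 at *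
  generalize algebraMap (𝓞 K1) (𝓞 F) (oAut B.B1.A.τ a1) = C1 at *
  generalize algebraMap (𝓞 K2) (𝓞 F) (oAut B.B2.A.τ a2) = C2 at *
  generalize algebraMap (𝓞 K3) (𝓞 F) (oAut B.B3.A.τ a3) = C3 at *
  have hN : (N : 𝓞 F) ≠ 0 := by exact_mod_cast hN0
  have zA1 : A1 ≠ 0 := by rintro rfl; rw [zero_mul] at m1; exact hN m1.symm
  have zA2 : A2 ≠ 0 := by rintro rfl; rw [zero_mul] at m2; exact hN m2.symm
  have zA3 : A3 ≠ 0 := by rintro rfl; rw [zero_mul] at m3; exact hN m3.symm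
  have zC1 : C1 ≠ 0 := by rintro rfl; rw [mul_zero] at m1; exact hN m1.symm
  have zC2 : C2 ≠ 0 := by rintro rfl; rw [mul_zero] at m2; exact hN m2.symm
  have zC3 : C3 ≠ 0 := by rintro rfl; rw [mul_zero] at m3; exact hN m3.symm
  have hsq : I ^ 2 * Ideal.span {(N : 𝓞 F)} = Ideal.span {A1 * A2 * A3} := by
    have e1 : I ^ 2 * Ideal.span {C1} = Ideal.span {A2 * A3} := by
      rw [← q1, ← Ideal.span_singleton_mul_span_singleton, ← p2, ← p3]; ring
    rw [← m1, ← Ideal.span_singleton_mul_span_singleton, mul_comm (Ideal.span {A1}), ← mul_assoc, e1,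
      Ideal.span_singleton_mul_span_singleton]
    congr 2; ring
  obtain ⟨e1, e2, he1, he2, ⟨k1, hk1⟩, ⟨k2, hk2⟩, ht0⟩ := t_sum (A1 * A2 * A3) (N * A1) (N * A2) (N * A3)
    (mul_ne_zero (mul_ne_zero zA1 zA2) zA3)
  obtain ⟨t, ht⟩ : ∃ t, t = A1 * A2 * A3 + N * (e1 * A1 + e2 * A2 + e1 * e2 * A3) := ⟨_, rfl⟩
  have htz : t ≠ 0 := by
    rw [ht]; convert ht0 using 1; ring
  have f1 : oAut B.B1.σ (t ^ 2 * (C1 * C2 * C3)) = t ^ 2 * (C1 * C2 * C3) := by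
    rw [map_mul, map_pow, map_mul, map_mul, v11, v12, v13]
    refine t_fix (N : 𝓞 F) A1 A2 A3 C1 C2 C3 e1 e2 _ t m2 m3 zA2 zA3 he1 ht ?_
    rw [ht, hk1, hk2]
    simp only [map_mul, map_add, map_intCast, u11, u12, u13]
  have f2 : oAut B.B2.σ (t ^ 2 * (C1 * C2 * C3)) = t ^ 2 * (C1 * C2 * C3) := by
    rw [map_mul, map_pow, map_mul, map_mul, v21, v22, v23]
    have := t_fix (N : 𝓞 F) A2 A1 A3 C2 C1 C3 e2 e1 (oAut B.B2.σ t) t m1 m3 zA1 zA3 he2 (by rw [ht]; ring) ?_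
    · linear_combination this
    rw [ht, hk1, hk2]
    simp only [map_mul, map_add, map_intCast, u21, u22, u23]
    ring
  obtain ⟨v, hv⟩ := B.B1.fixed _ f1
  rw [hv, S21] at f2
  obtain ⟨m, hm⟩ := B.B1.A.fixed v (SubQ.inj f2)
  rw [hm, map_intCast] at hv
  have hm0 : m ≠ 0 := by
    rintro rfl
    rw [Int.cast_zero] at hv
    exact mul_ne_zero (pow_ne_zero 2 htz) (mul_ne_zero (mul_ne_zero zC1 zC2) zC3) hv
  refine ⟨t * (C1 * C2 * C3), mul_ne_zero htz (mul_ne_zero (mul_ne_zero zC1 zC2) zC3), ?_⟩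
  apply B.stripF H l hl (N ^ 2 * m) (mul_ne_zero (pow_ne_zero 2 hN0) hm0)
  have hNs : Ideal.span {(N : 𝓞 F)} ≠ 0 := by
    rw [Ideal.zero_eq_bot, ne_eq, Ideal.span_singleton_eq_bot]; exact hN
  apply mul_right_cancel₀ hNs
  rw [mul_pow, mul_right_comm, hsq, Ideal.span_singleton_pow, Ideal.span_singleton_mul_span_singleton,
    Ideal.span_singleton_mul_span_singleton]
  congr 2
  push_cast
  rw [← hv]
  have : A1 * A2 * A3 * (t * (C1 * C2 * C3)) ^ 2 = (A1 * C1) * (A2 * C2) * (A3 * C3) * (t ^ 2 * (C1 * C2 * C3)) := by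
    ring
  rw [this, m1, m2, m3]; ring

end Biq


lemma QF.exists_hom {K : Type*} [Field K] [NumberField K] {d : ℤ} (A : QF K d) {Q : Type*} [Field Q]
    [CharZero Q] (h : IsSquare (d : Q)) : Nonempty (K →+* Q) := by
  obtain ⟨c, hc⟩ := h
  let f : K →ₐ[ℚ] AlgebraicClosure Q := IsAlgClosed.lift
  have hf : ∀ w, ∃ z, algebraMap Q (AlgebraicClosure Q) z = f w := by
    intro w
    obtain ⟨a, b, rfl⟩ := quad_decomp A.h2 A.τ A.δ A.hδ A.hτ w
    have h1 : (f A.δ - algebraMap Q (AlgebraicClosure Q) c) *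
        (f A.δ + algebraMap Q (AlgebraicClosure Q) c) = 0 := by
      have h2 := congrArg f A.hsq
      have h3 := congrArg (algebraMap Q (AlgebraicClosure Q)) hc
      rw [map_pow, map_intCast] at h2
      rw [map_intCast, map_mul] at h3
      linear_combination h2 + h3
    rcases mul_eq_zero.mp h1 with h1 | h1
    · refine ⟨a + b * c, ?_⟩
      rw [sub_eq_zero] at h1
      simp [h1]
    · refine ⟨a - b * c, ?_⟩
      rw [add_eq_zero_iff_eq_neg] at h1
      simp [h1]; ring
  choose g hg using hf
  have hinj := (algebraMap Q (AlgebraicClosure Q)).injective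
  exact ⟨{ toFun := g
           map_one' := hinj (by rw [hg, map_one, map_one])
           map_zero' := hinj (by rw [hg, map_zero, map_zero])
           map_mul' := fun x y => hinj (by rw [hg, map_mul, map_mul, hg, hg])
           map_add' := fun x y => hinj (by rw [hg, map_add, map_add, hg, hg]) }⟩

namespace Biq
variable {F K1 K2 K3 : Type*} [Field F] [NumberField F] [Field K1] [NumberField K1]
    [Algebra K1 F] [Field K2] [NumberField K2] [Algebra K2 F] [Field K3] [NumberField K3]
    [Algebra K3 F] {p q s : ℕ} [Fact p.Prime] [Fact q.Prime] [Fact s.Prime]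

lemma T2 (B : Biq F K1 K2 K3 p q s) (H : Hyp p q s) (l : Ideal (𝓞 F)) (hl : l ^ 2 = Ideal.span {2})
    (I : Ideal (𝓞 F)) (hI : I ≠ ⊥) (k : ℕ) (hk : ∃ g, I ^ (2 ^ k) = Ideal.span {g})
    (a b : 𝓞 F) (ha : a ≠ 0) (hb : b ≠ 0) (h : Ideal.span {a} * I ^ 2 = Ideal.span {b} * l) : False := by
  have hp := H.hp
  have hq := H.hq
  have hs := H.hs
  have hpp : p.Prime := Fact.out
  have hqp : q.Prime := Fact.out
  have hsp : s.Prime := Fact.out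
  have hpq : p ≠ q := by rintro rfl; omega
  have hps : p ≠ s := by rintro rfl; omega
  obtain ⟨g, hg⟩ := hk
  obtain ⟨β, hβ⟩ := B.B3.A.main3 H.hqs H.hq H.hs p H.hp k (Ideal.relNorm (𝓞 K3) I)
    (by rwa [ne_eq, Ideal.relNorm_eq_bot_iff])
    ⟨_, by rw [← map_pow, hg, Ideal.relNorm_singleton]⟩
  have hM : Ideal.relNorm (𝓞 K3) l = Ideal.span {2} := by
    apply sq_inj_ideal
    rw [← map_pow, hl]
    have : Ideal.span {(2 : 𝓞 F)} = (Ideal.span {(2 : 𝓞 K3)}).map (algebraMap (𝓞 K3) (𝓞 F)) := by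
      rw [Ideal.map_span, Set.image_singleton, map_ofNat]
    rw [this, Ideal.relNorm_algebraMap, finrank_O, B.B3.hF]
  have h1 := congrArg (Ideal.relNorm (𝓞 K3)) h
  rw [map_mul, map_mul, map_pow, hβ, hM, Ideal.relNorm_singleton, Ideal.relNorm_singleton,
    Ideal.span_singleton_pow, Ideal.span_singleton_mul_span_singleton,
    Ideal.span_singleton_mul_span_singleton, Ideal.span_singleton_eq_span_singleton] at h1
  obtain ⟨u, hu⟩ := h1
  have iq : IsSquare ((q : ℤ) : ℚ_[p]) := padic_sq p (by omega) q
    (QF.not_dvd_of_ne Fact.out Fact.out hpq) (by exact_mod_cast H.qp)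
  have is : IsSquare ((s : ℤ) : ℚ_[p]) := padic_sq p (by omega) s
    (QF.not_dvd_of_ne Fact.out Fact.out hps) (by exact_mod_cast H.sp)
  obtain ⟨φ⟩ := B.B3.A.exists_hom (Q := ℚ_[p]) (by rw [Int.cast_mul]; exact iq.mul is)
  obtain ⟨c, hc⟩ := B.B3.A.unit3 H.hqs hq hs p hp hpq hps H.qp H.sp φ u u.isUnit
  have hφ : ∀ w : 𝓞 F, ∀ X Y : K3, algebraMap (𝓞 F) F w = algebraMap K3 F X +
      algebraMap K3 F Y * algebraMap K1 F B.B1.A.δ →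
      algebraMap (𝓞 K3) K3 (Algebra.intNorm (𝓞 K3) (𝓞 F) w) = X ^ 2 - p * q * Y ^ 2 := by
    intro w X Y hw
    apply (algebraMap K3 F).injective
    rw [Algebra.algebraMap_intNorm (A := 𝓞 K3) (K := K3) (L := F) (B := 𝓞 F),
      quad_norm B.B3.hF B.B3.σ B.B3.ε B.B3.hε B.B3.hσ, hw]
    have h2 := congrArg (algebraMap K1 F) B.B1.A.hsq
    simp only [map_add, map_mul, map_sub, map_pow, AlgEquiv.commutes, B.h31, map_natCast, map_intCast] at h2 ⊢
    push_cast at h2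
    linear_combination -(algebraMap K3 F Y) ^ 2 * h2
  have hδ : algebraMap K1 F B.B1.A.δ ≠ 0 := by rw [map_ne_zero]; exact B.B1.A.hδ
  obtain ⟨X, Y, hXY⟩ := quad_decomp B.B3.hF B.B3.σ _ hδ B.h31 (algebraMap (𝓞 F) F (a * b))
  have h3 := hφ _ _ _ hXY
  have h4 := congrArg (fun z => φ (algebraMap (𝓞 K3) K3 z)) hu
  simp only [map_mul, map_pow, map_ofNat] at h4
  have h5 := congrArg φ h3
  simp only [map_mul, map_pow, map_sub, map_natCast] at h5
  rw [hc] at h4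
  refine padic_lemma p hp q (QF.not_dvd_of_ne hpp hqp hpq) (φ X) (φ Y)
    (φ (algebraMap (𝓞 K3) K3 (Algebra.intNorm (𝓞 K3) (𝓞 F) a)) * φ (algebraMap (𝓞 K3) K3 β) * c) ?_ ?_
  · by_contra! h0
    rw [map_eq_zero, map_eq_zero] at h0
    rw [h0.1, h0.2, map_zero, zero_mul, add_zero] at hXY
    have : a * b = 0 := by
      apply RingOfIntegers.coe_injective
      rw [hXY, map_zero]
    exact mul_ne_zero ha hb this
  · push_cast
    rw [← h5]
    linear_combination -φ (algebraMap (𝓞 K3) K3 (Algebra.intNorm (𝓞 K3) (𝓞 F) a)) * h4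

end Biq


lemma exists_nonres (l : ℕ) [Fact l.Prime] (h : l ≠ 2) : ∃ a : ℕ, legendreSym l a = -1 ∧ a.Coprime l := by
  obtain ⟨a, ha⟩ := quadraticChar_exists_neg_one (F := ZMod l) (by rwa [ZMod.ringChar_zmod_n])
  have h1 : legendreSym l (a.val : ℕ) = -1 := by
    rw [legendreSym]; simpa using ha
  refine ⟨a.val, h1, ?_⟩
  rw [Nat.coprime_comm, (Fact.out : l.Prime).coprime_iff_not_dvd]
  intro hd
  have : ((a.val : ℕ) : ZMod l) = 0 := (ZMod.natCast_eq_zero_iff _ _).mpr hd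
  rw [(legendreSym.eq_zero_iff l _).mpr (by exact_mod_cast this)] at h1
  norm_num at h1

lemma leg_congr (l : ℕ) [Fact l.Prime] (a b : ℕ) (h : a ≡ b [MOD l]) :
    legendreSym l a = legendreSym l b := by
  have := (ZMod.natCast_eq_natCast_iff a b l).mpr h
  rw [legendreSym, legendreSym]
  push_cast
  rw [this]

lemma exists_r (p q s : ℕ) [Fact p.Prime] [Fact q.Prime] [Fact s.Prime] (H : Hyp p q s) :
    ∃ r : ℕ, r.Prime ∧ r ≠ 2 ∧ r ≠ p ∧ r ≠ q ∧ r ≠ s ∧ legendreSym p r = -1 ∧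
      IsSquare ((p * q : ℕ) : ZMod r) ∧ IsSquare ((p * s : ℕ) : ZMod r) := by
  have hp := H.hp
  have hq := H.hq
  have hs := H.hs
  have hpp : p.Prime := Fact.out
  have hqp : q.Prime := Fact.out
  have hsp : s.Prime := Fact.out
  have hpq : p ≠ q := by rintro rfl; omega
  have hps : p ≠ s := by rintro rfl; omega
  have hp2 : p ≠ 2 := by rintro rfl; omega
  have hq2 : q ≠ 2 := by rintro rfl; omega
  have hs2 : s ≠ 2 := by rintro rfl; omega
  obtain ⟨a, ha, ca⟩ := exists_nonres p hp2
  obtain ⟨b, hb, cb⟩ := exists_nonres q hq2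
  obtain ⟨c, hc, cc⟩ := exists_nonres s hs2
  have c4p : Nat.Coprime 4 p := by
    rw [Nat.coprime_comm]
    exact (Nat.Coprime.pow_right 2 ((Nat.coprime_primes hpp Nat.prime_two).mpr hp2) : Nat.Coprime p (2 ^ 2))
  have c4q : Nat.Coprime 4 q := by
    rw [Nat.coprime_comm]
    exact (Nat.Coprime.pow_right 2 ((Nat.coprime_primes hqp Nat.prime_two).mpr hq2) : Nat.Coprime q (2 ^ 2))
  have c4s : Nat.Coprime 4 s := by
    rw [Nat.coprime_comm]
    exact (Nat.Coprime.pow_right 2 ((Nat.coprime_primes hsp Nat.prime_two).mpr hs2) : Nat.Coprime s (2 ^ 2))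
  have cpq := (Nat.coprime_primes hpp hqp).mpr hpq
  have cps := (Nat.coprime_primes hpp hsp).mpr hps
  have cqs := (Nat.coprime_primes hqp hsp).mpr H.hqs
  obtain ⟨k1, f1, f2⟩ := Nat.chineseRemainder c4p 1 a
  obtain ⟨k2, f3, f4⟩ := Nat.chineseRemainder cqs b c
  have c5 : Nat.Coprime (4 * p) (q * s) :=
    Nat.Coprime.mul_left (Nat.Coprime.mul_right c4q c4s) (Nat.Coprime.mul_right cpq cps)
  obtain ⟨k, f5, f6⟩ := Nat.chineseRemainder c5 k1 k2
  have g4 : k ≡ 1 [MOD 4] := (f5.of_mul_right p).trans f1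
  have gp : k ≡ a [MOD p] := (f5.of_mul_left 4).trans f2
  have gq : k ≡ b [MOD q] := (f6.of_mul_right s).trans f3
  have gs : k ≡ c [MOD s] := (f6.of_mul_left q).trans f4
  have cop : k.Coprime (4 * p * (q * s)) := by
    refine Nat.Coprime.mul_right (Nat.Coprime.mul_right ?_ ?_) (Nat.Coprime.mul_right ?_ ?_)
    · rw [Nat.Coprime, g4.gcd_eq]; rfl
    · rw [Nat.Coprime, gp.gcd_eq]; exact ca
    · rw [Nat.Coprime, gq.gcd_eq]; exact cb
    · rw [Nat.Coprime, gs.gcd_eq]; exact cc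
  obtain ⟨r, hrgt, hr, hrk⟩ := Nat.forall_exists_prime_gt_and_modEq (2 + p + q + s)
    (by have := hpp.pos; have := hqp.pos; have := hsp.pos; positivity) cop
  have : Fact r.Prime := ⟨hr⟩
  have r4 : r ≡ 1 [MOD 4] := ((hrk.of_mul_right (q * s)).of_mul_right p).trans g4
  have rp : r ≡ a [MOD p] := ((hrk.of_mul_right (q * s)).of_mul_left 4).trans gp
  have rq : r ≡ b [MOD q] := ((hrk.of_mul_left (4 * p)).of_mul_right s).trans gq
  have rs : r ≡ c [MOD s] := ((hrk.of_mul_left (4 * p)).of_mul_left q).trans gs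
  have hr4 : r % 4 = 1 := r4
  have lp : legendreSym r p = -1 := by
    rw [← legendreSym.quadratic_reciprocity_one_mod_four hr4 hp2, leg_congr p _ _ rp, ha]
  have lq : legendreSym r q = -1 := by
    rw [← legendreSym.quadratic_reciprocity_one_mod_four hr4 hq2, leg_congr q _ _ rq, hb]
  have ls : legendreSym r s = -1 := by
    rw [← legendreSym.quadratic_reciprocity_one_mod_four hr4 hs2, leg_congr s _ _ rs, hc]
  have key : ∀ t : ℕ, legendreSym r t = -1 → IsSquare ((p * t : ℕ) : ZMod r) := by
    intro t ht
    have h1 : legendreSym r ((p * t : ℕ) : ℤ) = 1 := by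
      push_cast
      rw [legendreSym.mul, lp, ht]; norm_num
    have h0 : (((p * t : ℕ) : ℤ) : ZMod r) ≠ 0 := by
      intro h0
      rw [(legendreSym.eq_zero_iff r _).mpr h0] at h1
      norm_num at h1
    have := (legendreSym.eq_one_iff r h0).mp h1
    exact_mod_cast this
  refine ⟨r, hr, by omega, by omega, by omega, by omega, ?_, key q lq, key s ls⟩
  rw [leg_congr p _ _ rp, ha]

lemma int_image {O k : Type*} [CommRing O] [Field k] (f : O →+* k) (τ : O → O) (x : O)
    (hinv : ∀ w, τ (τ w) = w) (hadd : ∀ v w, τ (v + w) = τ v + τ w) (hmul : ∀ v w, τ (v * w) = τ v * τ w)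
    (hx : τ x = -x) (h2 : (2 : k) ≠ 0) (hx0 : f x ≠ 0) (S : Subfield k) (hxS : f x ∈ S)
    (hfix : ∀ w, τ w = w → f w ∈ S) (w : O) : f w ∈ S := by
  have h1 := hfix (w + τ w) (by rw [hadd, hinv, add_comm])
  have hneg : τ (w + -τ w) = -(w + -τ w) := by
    have h0 : τ 0 = 0 := by
      have := hadd 0 0
      rw [add_zero] at this
      simpa using this
    have h3 : τ (-τ w) = -w := by
      have := hadd (-τ w) (τ w)
      rw [neg_add_cancel, h0, hinv] at this
      linear_combination -this
    rw [hadd, h3]; ring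
  have h3 := hfix (x * (w + -τ w)) (by rw [hmul, hx, hneg]; ring)
  have : f w = (f x * f (w + τ w) + f (x * (w + -τ w))) / (2 * f x) := by
    field_simp
    simp only [map_add, map_mul, map_neg]
    ring
  rw [this]
  exact S.div_mem (S.add_mem (S.mul_mem hxS h1) h3) (S.mul_mem (ofNat_mem S 2) hxS)

namespace Biq
variable {F K1 K2 K3 : Type*} [Field F] [NumberField F] [Field K1] [NumberField K1]
    [Algebra K1 F] [Field K2] [NumberField K2] [Algebra K2 F] [Field K3] [NumberField K3]
    [Algebra K3 F] {p q s : ℕ} [Fact p.Prime] [Fact q.Prime] [Fact s.Prime]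

lemma T3 (B : Biq F K1 K2 K3 p q s) (H : Hyp p q s) :
    ∃ R : Ideal (𝓞 F), R ≠ ⊥ ∧ psi p (Ideal.absNorm R) = -1 := by
  have hpp : p.Prime := Fact.out
  have hqp : q.Prime := Fact.out
  have hsp : s.Prime := Fact.out
  obtain ⟨r, hr, r2, rp, rq, rs, hleg, sq1, sq2⟩ := exists_r p q s H
  have : Fact r.Prime := ⟨hr⟩
  obtain ⟨x, hx1, hx2, hx3⟩ := B.B1.A.exists_x
  obtain ⟨y, hy1, hy2, hy3⟩ := B.B2.A.exists_x
  have hne : Ideal.span {((r : ℤ) : 𝓞 F)} ≠ ⊤ := by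
    rw [ne_eq, Ideal.span_singleton_eq_top]
    intro hu
    have := int_div_O (K := F) r 1 (by rw [Int.cast_one]; exact hu.dvd)
    have := Int.isUnit_iff.mp (isUnit_of_dvd_one this)
    have := hr.one_lt
    omega
  obtain ⟨R, hR, hle⟩ := Ideal.exists_le_maximal _ hne
  let _ : Field (𝓞 F ⧸ R) := Ideal.Quotient.field R
  have hr0 : ((r : ℕ) : 𝓞 F ⧸ R) = 0 := by
    have : ((r : ℤ) : 𝓞 F) ∈ R := hle (Ideal.mem_span_singleton_self _)
    have := Ideal.Quotient.eq_zero_iff_mem.mpr this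
    simpa using this
  have hchar : CharP (𝓞 F ⧸ R) r := by
    have h1 := ringChar.charP (𝓞 F ⧸ R)
    have h2 : ringChar (𝓞 F ⧸ R) ∣ r := ringChar.dvd hr0
    rcases (Nat.dvd_prime hr).mp h2 with h | h
    · rw [h] at h1
      exact absurd rfl (CharP.char_ne_one (𝓞 F ⧸ R) 1)
    · rwa [h] at h1
  let S : Subfield (𝓞 F ⧸ R) := (ZMod.castHom (dvd_refl r) (𝓞 F ⧸ R)).fieldRange
  have hSint : ∀ m : ℤ, (m : 𝓞 F ⧸ R) ∈ S := fun m => intCast_mem S m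
  have hnz : ∀ t : ℕ, t.Prime → r ≠ t → (t : 𝓞 F ⧸ R) ≠ 0 := by
    intro t ht hrt h0
    have := (CharP.cast_eq_zero_iff (𝓞 F ⧸ R) r t).mp h0
    exact hrt ((Nat.prime_dvd_prime_iff_eq hr ht).mp this)
  have hsqm : ∀ (n : ℕ) (z : 𝓞 F ⧸ R), IsSquare (n : ZMod r) → z ^ 2 = n → z ∈ S := by
    rintro n z ⟨c, hc⟩ hz
    have h1 := congrArg (ZMod.castHom (dvd_refl r) (𝓞 F ⧸ R)) hc
    rw [map_natCast, map_mul] at h1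
    have h2 : (z - ZMod.castHom (dvd_refl r) (𝓞 F ⧸ R) c) * (z + ZMod.castHom (dvd_refl r) (𝓞 F ⧸ R) c) = 0 := by
      linear_combination hz + h1
    rcases mul_eq_zero.mp h2 with h | h
    · rw [sub_eq_zero.mp h]; exact ⟨c, rfl⟩
    · rw [eq_neg_of_add_eq_zero_left h]; exact S.neg_mem ⟨c, rfl⟩
  let f : 𝓞 F →+* 𝓞 F ⧸ R := Ideal.Quotient.mk R
  have h2k : (2 : 𝓞 F ⧸ R) ≠ 0 := by exact_mod_cast hnz 2 Nat.prime_two r2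
  have hX : f (algebraMap (𝓞 K1) (𝓞 F) x) ^ 2 = ((p * q : ℕ) : 𝓞 F ⧸ R) := by
    rw [← map_pow, ← map_pow, hx2, map_intCast, map_intCast]; push_cast; ring
  have hY : f (algebraMap (𝓞 K2) (𝓞 F) y) ^ 2 = ((p * s : ℕ) : 𝓞 F ⧸ R) := by
    rw [← map_pow, ← map_pow, hy2, map_intCast, map_intCast]; push_cast; ring
  have hX0 : f (algebraMap (𝓞 K1) (𝓞 F) x) ≠ 0 := by
    intro h0
    rw [h0] at hX
    push_cast at hX
    exact mul_ne_zero (hnz p hpp rp) (hnz q hqp rq) (by rw [← hX]; ring)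
  have hY0 : f (algebraMap (𝓞 K2) (𝓞 F) y) ≠ 0 := by
    intro h0
    rw [h0] at hY
    push_cast at hY
    exact mul_ne_zero (hnz p hpp rp) (hnz s hsp rs) (by rw [← hY]; ring)
  have hK1 : ∀ w : 𝓞 K1, f (algebraMap (𝓞 K1) (𝓞 F) w) ∈ S := by
    intro w
    refine int_image (f.comp (algebraMap (𝓞 K1) (𝓞 F))) (oAut B.B1.A.τ) x B.B1.A.invol
      (map_add _) (map_mul _) hx3 h2k hX0 S (hsqm _ _ sq1 hX) ?_ w
    intro v hv
    obtain ⟨m, rfl⟩ := B.B1.A.fixed v hv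
    rw [map_intCast]
    exact hSint m
  have hF : ∀ w : 𝓞 F, f w ∈ S := by
    intro w
    refine int_image f (oAut B.B1.σ) (algebraMap (𝓞 K2) (𝓞 F) y) B.B1.invol
      (map_add _) (map_mul _) ?_ h2k hY0 S (hsqm _ _ sq2 hY) ?_ w
    · rw [compat B.B2.A B.B1.σ B.h12, hy3, map_neg]
    intro v hv
    obtain ⟨m, rfl⟩ := B.B1.fixed v hv
    exact hK1 m
  have hcard : Ideal.absNorm R = r := by
    rw [Ideal.absNorm_apply, Submodule.cardQuot_apply]
    have hb : Function.Bijective (ZMod.castHom (dvd_refl r) (𝓞 F ⧸ R)) := by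
      refine ⟨RingHom.injective _, ?_⟩
      intro z
      obtain ⟨w, rfl⟩ := Ideal.Quotient.mk_surjective z
      exact hF w
    rw [← Nat.card_eq_of_bijective _ hb, Nat.card_zmod]
  refine ⟨R, ?_, ?_⟩
  · rintro rfl
    rw [Ideal.absNorm_bot] at hcard
    exact hr.ne_zero hcard.symm
  · rw [hcard, psi_coprime, hleg]
    rw [Nat.prime_dvd_prime_iff_eq hpp hr]
    exact rp.symm

end Biq


lemma klein_of {G : Type*} [CommGroup G] [Finite G] (f : G → ℤ) (hf : ∀ a b, f (a * b) = f a * f b)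
    (hpm : ∀ a, f a = 1 ∨ f a = -1) (l : G) (hl2 : l ^ 2 = 1) (hl1 : l ≠ 1) (hfl : f l = 1)
    (h1 : ∀ g k, g ^ (2 ^ k) = 1 → f g = 1 → g = 1 ∨ g = l)
    (h2 : ∀ g k, g ^ (2 ^ k) = 1 → g ^ 2 ≠ l) (hr : ∃ r, f r = -1) (P : Sylow 2 G) :
    Nonempty (↥P ≃* Multiplicative (ZMod 2) × Multiplicative (ZMod 2)) := by
  classical
  have hu := Sylow.unique_of_normal P inferInstance
  have hmem : ∀ g k, g ^ (2 ^ k) = 1 → g ∈ P := by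
    intro g k hg
    have hpg : IsPGroup 2 (Subgroup.zpowers g) := by
      rintro ⟨y, hy⟩
      obtain ⟨n, rfl⟩ := Subgroup.mem_zpowers_iff.mp hy
      refine ⟨k, Subtype.ext ?_⟩
      simp only [Subgroup.coe_pow, Subgroup.coe_one]
      rw [← zpow_natCast, ← zpow_mul, mul_comm, zpow_mul, zpow_natCast, hg, one_zpow]
    obtain ⟨Q, hQ⟩ := hpg.exists_le_sylow
    have : Q = P := Subsingleton.elim _ _
    rw [← this]
    exact hQ (Subgroup.mem_zpowers g)
  have hpow : ∀ g ∈ P, ∃ k, g ^ (2 ^ k) = 1 := by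
    intro g hg
    obtain ⟨k, hk⟩ := P.isPGroup' ⟨g, hg⟩
    exact ⟨k, by simpa using congrArg Subtype.val hk⟩
  have hf1 : f 1 = 1 := by
    have := hf 1 1
    rw [mul_one] at this
    rcases hpm 1 with h | h
    · exact h
    · rw [h] at this; norm_num at this
  have hsq : ∀ g ∈ P, g ^ 2 = 1 := by
    intro g hg
    obtain ⟨k, hk⟩ := hpow g hg
    have h3 : f (g ^ 2) = 1 := by
      rw [sq, hf]
      rcases hpm g with h | h <;> rw [h] <;> norm_num
    rcases h1 (g ^ 2) k (by rw [← pow_mul, mul_comm, pow_mul, hk, one_pow]) h3 with h | h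
    · exact h
    · exact absurd h (h2 g k hk)
  obtain ⟨r0, hr0⟩ := hr
  have hfpow : ∀ n, f (r0 ^ n) = (-1) ^ n := by
    intro n
    induction n with
    | zero => rw [pow_zero, hf1, pow_zero]
    | succ n ih => rw [pow_succ, hf, ih, hr0, pow_succ]
  obtain ⟨r, hrP, hfr⟩ : ∃ r ∈ P, f r = -1 := by
    obtain ⟨k, m, hm, hkm⟩ := Nat.exists_eq_two_pow_mul_odd (n := orderOf r0) (orderOf_pos r0).ne'
    refine ⟨r0 ^ m, hmem _ k ?_, ?_⟩
    · rw [← pow_mul, mul_comm, ← hkm, pow_orderOf_eq_one]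
    · rw [hfpow, hm.neg_one_pow]
  have hlP : l ∈ P := hmem l 1 (by simpa using hl2)
  have hflr : f (l * r) = -1 := by rw [hf, hfl, hfr]; norm_num
  have n1 : (1 : G) ≠ r := by rintro rfl; rw [hf1] at hfr; norm_num at hfr
  have n2 : (1 : G) ≠ l * r := by intro h; rw [← h, hf1] at hflr; norm_num at hflr
  have n3 : l ≠ r := by rintro rfl; rw [hfl] at hfr; norm_num at hfr
  have n4 : l ≠ l * r := by intro h; rw [← h, hfl] at hflr; norm_num at hflr
  have n5 : r ≠ l * r := by
    intro h
    exact hl1 (by simpa using h.symm)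
  have hset : ((P : Subgroup G) : Set G) = (({1, l, r, l * r} : Finset G) : Set G) := by
    ext g
    simp only [SetLike.mem_coe, Finset.coe_insert, Finset.coe_singleton, Set.mem_insert_iff,
      Set.mem_singleton_iff]
    constructor
    · intro hg
      have hg : g ∈ P := hg
      rcases hpm g with h | h
      · obtain ⟨k, hk⟩ := hpow g hg
        rcases h1 g k hk h with h | h <;> tauto
      · have h5 : f (g * r) = 1 := by rw [hf, h, hfr]; norm_num
        have hgr : g * r ∈ P := P.mul_mem hg hrP
        obtain ⟨k, hk⟩ := hpow _ hgr
        have hrr : r * r = 1 := by rw [← sq]; exact hsq r hrP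
        have hgg : g = g * r * r := by rw [mul_assoc, hrr, mul_one]
        rcases h1 _ k hk h5 with h | h
        · rw [h, one_mul] at hgg; tauto
        · rw [h] at hgg; tauto
    · rintro (rfl | rfl | rfl | rfl)
      · exact P.one_mem
      · exact hlP
      · exact hrP
      · exact P.mul_mem hlP hrP
  have hcard : Nat.card ↥P = 4 := by
    have h3 : Nat.card ↥P = Set.ncard ((P : Subgroup G) : Set G) := rfl
    rw [h3, hset, Set.ncard_coe_finset]
    rw [Finset.card_insert_of_notMem, Finset.card_insert_of_notMem, Finset.card_insert_of_notMem,
      Finset.card_singleton]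
    · simpa using n5
    · simp only [Finset.mem_insert, Finset.mem_singleton]; tauto
    · simp only [Finset.mem_insert, Finset.mem_singleton]
      have := hl1.symm
      tauto
  have hexp : Monoid.exponent ↥P = 2 := by
    have hd : Monoid.exponent ↥P ∣ 2 := by
      apply Monoid.exponent_dvd_of_forall_pow_eq_one
      rintro ⟨g, hg⟩
      exact Subtype.ext (hsq g hg)
    rcases (Nat.dvd_prime Nat.prime_two).mp hd with h | h
    · exfalso
      have := Monoid.exp_eq_one_iff.mp h
      exact hl1 (congrArg Subtype.val (Subsingleton.elim (⟨l, hlP⟩ : ↥P) 1))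
    · exact h
  have : IsKleinFour ↥P := ⟨hcard, hexp⟩
  obtain ⟨e⟩ := IsKleinFour.nonempty_mulEquiv (G₁ := ↥P) (G₂ := Multiplicative (ZMod 2 × ZMod 2))
  exact ⟨e.trans (MulEquiv.prodMultiplicative _ _)⟩

namespace Biq
variable {F K1 K2 K3 : Type*} [Field F] [NumberField F] [Field K1] [NumberField K1]
    [Algebra K1 F] [Field K2] [NumberField K2] [Algebra K2 F] [Field K3] [NumberField K3]
    [Algebra K3 F] {p q s : ℕ} [Fact p.Prime] [Fact q.Prime] [Fact s.Prime]

lemma final (B : Biq F K1 K2 K3 p q s) (H : Hyp p q s) (P : Sylow 2 (ClassGroup (𝓞 F))) :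
    Nonempty (↥P ≃* Multiplicative (ZMod 2) × Multiplicative (ZMod 2)) := by
  have hp := H.hp
  have hq := H.hq
  have hpp : p.Prime := Fact.out
  have hqp : q.Prime := Fact.out
  have hpq : p ≠ q := by rintro rfl; omega
  obtain ⟨x, hx1, hx2, hx3⟩ := B.B1.A.exists_x
  obtain ⟨l, hl⟩ : ∃ l : Ideal (𝓞 F), l ^ 2 = Ideal.span {2} := by
    refine ⟨_, two_ideal (algebraMap (𝓞 K1) (𝓞 F) x) (p * q) ?_ ?_⟩
    · rw [← map_pow, hx2, map_intCast]
    · rw [Int.mul_emod]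
      have h1 : (p : ℤ) % 4 = 1 := by omega
      have h2 : (q : ℤ) % 4 = 3 := by omega
      rw [h1, h2]; norm_num
  have h2ne : Ideal.span {(2 : 𝓞 F)} ≠ ⊥ := by
    rw [ne_eq, Ideal.span_singleton_eq_bot]; exact two_ne_zero
  have hl0 : l ≠ ⊥ := by
    rintro rfl
    rw [← Ideal.zero_eq_bot, zero_pow two_ne_zero, Ideal.zero_eq_bot] at hl
    exact h2ne hl.symm
  have hψs : ∀ g : 𝓞 F, g ≠ 0 → psi p (Ideal.absNorm (Ideal.span {g})) = 1 := by
    intro g hg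
    refine B.B1.psi_span p ?_ g hg
    intro n hn X Y h
    exact psi_norm p (by omega) q (QF.not_dvd_of_ne hpp hqp hpq) (by exact_mod_cast H.qp) n hn X Y h
  have hψl : psi p (Ideal.absNorm l) = 1 := by
    have h4 : Ideal.absNorm l = 2 * 2 := by
      have h1 : Ideal.absNorm (Ideal.span {(2 : 𝓞 F)}) = 16 := by
        have : Ideal.span {(2 : 𝓞 F)} = (Ideal.span {(2 : 𝓞 K1)}).map (algebraMap (𝓞 K1) (𝓞 F)) := by
          rw [Ideal.map_span, Set.image_singleton, map_ofNat]
        rw [← SubQ.absNorm_rel (K := K1), this, Ideal.relNorm_algebraMap, finrank_O, B.B1.hF, map_pow,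
          B.B1.A.absNorm_two]
        norm_num
      rw [← hl, map_pow] at h1
      nlinarith
    rw [h4, psi_mul, psi_two p hp]; norm_num
  let n0 : ∀ I : Ideal (𝓞 F), I ≠ ⊥ → I ∈ nonZeroDivisors (Ideal (𝓞 F)) := fun I hI =>
    mem_nonZeroDivisors_of_ne_zero hI
  have hsur : ∀ C : ClassGroup (𝓞 F), ∃ (I : Ideal (𝓞 F)) (hI : I ≠ ⊥), C = ClassGroup.mk0 ⟨I, n0 I hI⟩ := by
    intro C
    obtain ⟨⟨I, hI⟩, rfl⟩ := ClassGroup.mk0_surjective C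
    exact ⟨I, nonZeroDivisors.ne_zero hI, rfl⟩
  choose rep hrep0 hrep using hsur
  have hval : ∀ (I : Ideal (𝓞 F)) (hI : I ≠ ⊥),
      psi p (Ideal.absNorm (rep (ClassGroup.mk0 ⟨I, n0 I hI⟩))) = psi p (Ideal.absNorm I) := by
    intro I hI
    have h1 := hrep (ClassGroup.mk0 ⟨I, n0 I hI⟩)
    obtain ⟨u, v, hu, hv, huv⟩ := ClassGroup.mk0_eq_mk0_iff.mp h1
    have h2 := congrArg (fun J => psi p (Ideal.absNorm J)) huv
    simp only [map_mul, psi_mul, hψs u hu, hψs v hv, one_mul] at h2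
    exact h2.symm
  have hmk : ∀ (I J : Ideal (𝓞 F)) (hI : I ≠ ⊥) (hJ : J ≠ ⊥),
      ClassGroup.mk0 ⟨I, n0 I hI⟩ * ClassGroup.mk0 ⟨J, n0 J hJ⟩ =
      ClassGroup.mk0 ⟨I * J, n0 _ (mul_ne_zero hI hJ)⟩ := by
    intro I J hI hJ
    rw [← map_mul]; rfl
  have hmkp : ∀ (I : Ideal (𝓞 F)) (hI : I ≠ ⊥) (k : ℕ),
      ClassGroup.mk0 ⟨I, n0 I hI⟩ ^ k = ClassGroup.mk0 ⟨I ^ k, n0 _ (pow_ne_zero k hI)⟩ := by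
    intro I hI k
    rw [← map_pow]; rfl
  have hprin : ∀ (I : Ideal (𝓞 F)) (hI : I ≠ ⊥), ClassGroup.mk0 ⟨I, n0 I hI⟩ = 1 → ∃ g, I = Ideal.span {g} := by
    intro I hI h
    obtain ⟨g, hg⟩ := ((ClassGroup.mk0_eq_one_iff _).mp h).principal
    exact ⟨g, hg⟩
  have hprin2 : ∀ (I : Ideal (𝓞 F)) (hI : I ≠ ⊥), (∃ g, I = Ideal.span {g}) → ClassGroup.mk0 ⟨I, n0 I hI⟩ = 1 := by
    rintro I hI ⟨g, hg⟩
    exact (ClassGroup.mk0_eq_one_iff _).mpr ⟨g, hg⟩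
  have hno : ∀ g k, g ^ (2 ^ k) = 1 → g ^ 2 ≠ ClassGroup.mk0 ⟨l, n0 l hl0⟩ := by
    intro g k hg h
    rw [hrep g, hmkp _ (hrep0 g)] at hg h
    obtain ⟨a, b, ha, hb, hab⟩ := ClassGroup.mk0_eq_mk0_iff.mp h
    exact B.T2 H l hl (rep g) (hrep0 g) k (hprin _ (pow_ne_zero _ (hrep0 g)) hg) a b ha hb hab
  refine klein_of (fun C => psi p (Ideal.absNorm (rep C))) ?_ ?_ (ClassGroup.mk0 ⟨l, n0 l hl0⟩) ?_ ?_ ?_ ?_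
    hno ?_ P
  · intro a b
    have : a * b = ClassGroup.mk0 ⟨rep a * rep b, n0 _ (mul_ne_zero (hrep0 a) (hrep0 b))⟩ := by
      rw [← hmk _ _ (hrep0 a) (hrep0 b), ← hrep, ← hrep]
    beta_reduce
    rw [this, hval _ (mul_ne_zero (hrep0 a) (hrep0 b)), map_mul, psi_mul]
  · intro a
    apply psi_pm
    rw [ne_eq, Ideal.absNorm_eq_zero_iff]
    exact hrep0 a
  · rw [hmkp l hl0]
    exact hprin2 _ (pow_ne_zero _ hl0) ⟨2, hl⟩
  · intro h
    exact hno 1 0 (one_pow _) (by rw [h, one_pow])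
  · beta_reduce
    rw [hval l hl0, hψl]
  · intro g k hg hf
    rw [hrep g, hmkp _ (hrep0 g)] at hg
    obtain ⟨t, ht, h | h⟩ := B.T1 H l hl (rep g) (hrep0 g) k (hprin _ (pow_ne_zero _ (hrep0 g)) hg) hf
    · left
      obtain ⟨c, hc⟩ := h
      rw [hrep g]
      exact hprin2 _ (hrep0 g) (principal_of_mul _ t c ht hc)
    · right
      obtain ⟨c, hc⟩ := h
      rw [hrep g, ClassGroup.mk0_eq_mk0_iff]
      refine ⟨t, c, ht, ?_, ?_⟩
      · rintro rfl
        rw [Ideal.span_singleton_zero, Ideal.bot_mul] at hc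
        refine mul_ne_zero (hrep0 g) ?_ hc
        rw [Ideal.zero_eq_bot, ne_eq, Ideal.span_singleton_eq_bot]
        exact ht
      · rw [mul_comm]; exact hc
  · obtain ⟨R, hR, hR2⟩ := B.T3 H
    exact ⟨ClassGroup.mk0 ⟨R, n0 R hR⟩, by beta_reduce; rw [hval R hR, hR2]⟩

end Biq


lemma F1_nonsq {F : Type*} [Field F] [NumberField F] (a b : ℕ) (ha : a.Prime) (hb : b.Prime)
    (hab : a ≠ b) (w : F) (hw : w ^ 2 = (((a : ℤ) * b : ℤ) : F)) :
    w ∉ (algebraMap ℚ F).range := by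
  rintro ⟨r, rfl⟩
  have h1 : r ^ 2 = ((a * b : ℕ) : ℚ) := by
    apply (algebraMap ℚ F).injective
    rw [map_pow, hw, map_natCast]; push_cast; rfl
  have h2 : IsSquare ((a * b : ℕ) : ℚ) := ⟨r, by rw [← h1, sq]⟩
  rw [Rat.isSquare_natCast_iff] at h2
  obtain ⟨m, hm⟩ := h2
  have h3 : a ∣ m := by
    have : a ∣ m * m := ⟨b, hm.symm⟩
    exact (ha.dvd_mul.mp this).elim id id
  obtain ⟨c, rfl⟩ := h3
  have h4 : b = a * (c * c) := by
    apply Nat.eq_of_mul_eq_mul_left ha.pos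
    rw [hm]; ring
  exact hab ((Nat.prime_dvd_prime_iff_eq ha hb).mp ⟨_, h4⟩)

lemma F1_deg {k F : Type*} [Field k] [Field F] [Algebra k F] (u : F) (c : k)
    (hu : u ^ 2 = algebraMap k F c) (hn : u ∉ (algebraMap k F).range) :
    Module.finrank k (IntermediateField.adjoin k {u}) = 2 := by
  have hz : Polynomial.aeval u (Polynomial.X ^ 2 - Polynomial.C c) = 0 := by
    simp [hu]
  have hm : (Polynomial.X ^ 2 - Polynomial.C c : Polynomial k).Monic :=
    Polynomial.monic_X_pow_sub_C c two_ne_zero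
  have hi : IsIntegral k u := ⟨_, hm, by simpa [Polynomial.aeval_def] using hz⟩
  rw [IntermediateField.adjoin.finrank hi]
  have h1 := Polynomial.natDegree_le_of_dvd (minpoly.dvd k u hz) hm.ne_zero
  rw [Polynomial.natDegree_X_pow_sub_C] at h1
  have h2 := minpoly.natDegree_pos hi
  have h3 : (minpoly k u).natDegree ≠ 1 := fun h => hn (minpoly.natDegree_eq_one_iff.mp h)
  omega

lemma F1_aut {k F : Type*} [Field k] [CharZero k] [Field F] [Algebra k F]
    (hF : Module.finrank k F = 2) (u : F) (c : k)
    (hu : u ^ 2 = algebraMap k F c) (hn : u ∉ (algebraMap k F).range) :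
    ∃ σ : F ≃ₐ[k] F, σ u = -u := by
  have : Algebra.IsQuadraticExtension k F := ⟨hF⟩
  have : FiniteDimensional k F := Module.finite_of_finrank_eq_succ hF
  have : IsGalois k F := inferInstance
  by_contra! hc
  apply hn
  have h1 : u ∈ (⊥ : IntermediateField k F) := by
    rw [IsGalois.mem_bot_iff_fixed]
    intro f
    have h2 : (f u) ^ 2 = u ^ 2 := by rw [← map_pow, hu, AlgEquiv.commutes]
    rcases sq_eq_sq_iff_eq_or_eq_neg.mp h2 with h | h
    · exact h
    · exact absurd h (hc f)
  exact IntermediateField.mem_bot.mp h1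

lemma F1_ext {F : Type*} [Field F] [NumberField F] (x y : F)
    (htop : IntermediateField.adjoin ℚ {x, y} = ⊤) (K : IntermediateField ℚ F)
    (hx : x ∈ K) (hy : y ∈ K) : K = ⊤ := by
  rw [eq_top_iff, ← htop, IntermediateField.adjoin_le_iff]
  rintro _ (rfl | rfl)
  · exact hx
  · exact hy

open IntermediateField in
lemma F1_four {F : Type*} [Field F] [NumberField F] (x y : F) (p q s : ℕ) (hp : p.Prime)
    (hq : q.Prime) (hs : s.Prime) (hpq : p ≠ q) (hps : p ≠ s) (hqs : q ≠ s)
    (hx : x ^ 2 = (((p : ℤ) * q : ℤ) : F)) (hy : y ^ 2 = (((p : ℤ) * s : ℤ) : F))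
    (htop : IntermediateField.adjoin ℚ {x, y} = ⊤) : Module.finrank ℚ F = 4 := by
  have hxn := F1_nonsq p q hp hq hpq x hx
  have hd : Module.finrank ℚ ℚ⟮x⟯ = 2 := F1_deg x ((p : ℚ) * q) (by rw [hx]; push_cast; simp) hxn
  have hp0 : (p : F) ≠ 0 := by exact_mod_cast hp.ne_zero
  have hx0 : x ≠ 0 := by
    rintro rfl; exact hxn (zero_mem _)
  set X : ℚ⟮x⟯ := ⟨x, mem_adjoin_simple_self ℚ x⟩ with hX
  have hXn : X ∉ (algebraMap ℚ ℚ⟮x⟯).range := by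
    rintro ⟨r, hr⟩
    exact hxn ⟨r, congrArg (algebraMap ℚ⟮x⟯ F) hr⟩
  have hX2 : X ^ 2 = algebraMap ℚ ℚ⟮x⟯ ((p : ℚ) * q) := by
    apply Subtype.ext
    change x ^ 2 = _
    rw [hx]; push_cast; simp
  obtain ⟨τ, hτ⟩ := F1_aut hd X _ hX2 hXn
  have hyn : y ∉ (algebraMap ℚ⟮x⟯ F).range := by
    rintro ⟨Y, hY⟩
    have hY2 : Y ^ 2 = algebraMap ℚ ℚ⟮x⟯ ((p : ℚ) * s) := by
      apply (algebraMap ℚ⟮x⟯ F).injective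
      rw [map_pow, hY, hy]; push_cast; simp
    have h2 : (τ Y) ^ 2 = Y ^ 2 := by rw [← map_pow, hY2, AlgEquiv.commutes]
    have hX0 : X ≠ 0 := fun h => hx0 (congrArg Subtype.val h)
    rcases sq_eq_sq_iff_eq_or_eq_neg.mp h2 with h | h
    · obtain ⟨r, hr⟩ := quad_fixed hd τ X hX0 hτ Y h
      refine F1_nonsq p s hp hs hps y hy ⟨r, ?_⟩
      rw [← hY, hr]; rfl
    · obtain ⟨r, hr⟩ := quad_fixed hd τ X hX0 hτ (X * Y / p) (by
        rw [map_div₀, map_mul, h, hτ, map_natCast]; ring)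
      refine F1_nonsq q s hq hs hqs (x * y / p) ?_ ⟨r, ?_⟩
      · rw [div_pow, mul_pow, hx, hy]; push_cast; field_simp
      · have h5 := congrArg (algebraMap ℚ⟮x⟯ F) hr
        rw [map_div₀, map_mul, hY, map_natCast] at h5
        exact h5.symm
  have hd2 : Module.finrank ℚ⟮x⟯ (IntermediateField.adjoin ℚ⟮x⟯ {y}) = 2 :=
    F1_deg y ((p : ℚ⟮x⟯) * s) (by rw [hy]; push_cast; simp) hyn
  have htop2 : IntermediateField.adjoin ℚ⟮x⟯ {y} = ⊤ := by
    apply restrictScalars_injective ℚ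
    rw [restrictScalars_top]
    refine F1_ext x y htop _ ?_ ?_
    · exact (IntermediateField.adjoin ℚ⟮x⟯ {y}).algebraMap_mem X
    · exact mem_adjoin_simple_self _ y
  rw [htop2, IntermediateField.finrank_top'] at hd2
  rw [← Module.finrank_mul_finrank ℚ ℚ⟮x⟯ F, hd, hd2]

open IntermediateField in
lemma F1_sub {F : Type*} [Field F] [NumberField F] (u v : F) (a b : ℕ) (c : ℤ) (ha : a.Prime)
    (hb : b.Prime) (hab : a ≠ b) (h4 : Module.finrank ℚ F = 4)
    (hu : u ^ 2 = (((a : ℤ) * b : ℤ) : F)) (hv : v ^ 2 = (c : F))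
    (htop : ∀ K : IntermediateField ℚ F, u ∈ K → v ∈ K → K = ⊤) :
    ∃ B : SubQ F ℚ⟮u⟯ ((a : ℤ) * b), algebraMap ℚ⟮u⟯ F B.A.δ = u ∧ B.σ u = u ∧ B.σ v = -v := by
  have hxn := F1_nonsq a b ha hb hab u hu
  have hd : Module.finrank ℚ ℚ⟮u⟯ = 2 := F1_deg u ((a : ℚ) * b) (by rw [hu]; push_cast; simp) hxn
  have hu0 : u ≠ 0 := by
    rintro rfl; exact hxn (zero_mem _)
  set X : ℚ⟮u⟯ := ⟨u, mem_adjoin_simple_self ℚ u⟩ with hX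
  have hXn : X ∉ (algebraMap ℚ ℚ⟮u⟯).range := by
    rintro ⟨r, hr⟩
    exact hxn ⟨r, congrArg (algebraMap ℚ⟮u⟯ F) hr⟩
  have hX2 : X ^ 2 = algebraMap ℚ ℚ⟮u⟯ ((a : ℚ) * b) := by
    apply Subtype.ext
    change u ^ 2 = _
    rw [hu]; push_cast; simp
  obtain ⟨τ, hτ⟩ := F1_aut hd X _ hX2 hXn
  have hd2 : Module.finrank ℚ⟮u⟯ F = 2 := by
    have := Module.finrank_mul_finrank ℚ ℚ⟮u⟯ F
    rw [hd, h4] at this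
    omega
  have hvn : v ∉ (algebraMap ℚ⟮u⟯ F).range := by
    rintro ⟨V, hV⟩
    have h1 := htop ℚ⟮u⟯ (mem_adjoin_simple_self ℚ u) (by rw [← hV]; exact V.2)
    rw [h1, IntermediateField.finrank_top'] at hd
    omega
  obtain ⟨σ, hσ⟩ := F1_aut hd2 v (c : ℚ⟮u⟯) (by rw [hv, map_intCast]) hvn
  refine ⟨⟨⟨hd, τ, X, fun h => hu0 (congrArg Subtype.val h), hτ, ?_⟩, hd2, σ, v, ?_, hσ⟩, rfl, ?_, hσ⟩
  · rw [hX2]; push_cast; simp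
  · rintro rfl; exact hvn (zero_mem _)
  · exact σ.commutes X

open IntermediateField in
lemma F1_biq {F : Type*} [Field F] [NumberField F] (x y : F) (p q s : ℕ) (hp : p.Prime)
    (hq : q.Prime) (hs : s.Prime) (hpq : p ≠ q) (hps : p ≠ s) (hqs : q ≠ s)
    (hx : x ^ 2 = (((p : ℤ) * q : ℤ) : F)) (hy : y ^ 2 = (((p : ℤ) * s : ℤ) : F))
    (htop : IntermediateField.adjoin ℚ {x, y} = ⊤) :
    Nonempty (Biq F ℚ⟮x⟯ ℚ⟮y⟯ ℚ⟮x * y / p⟯ p q s) := by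
  have h4 := F1_four x y p q s hp hq hs hpq hps hqs hx hy htop
  have hp0 : (p : F) ≠ 0 := by exact_mod_cast hp.ne_zero
  have hx0 : x ≠ 0 := by
    rintro rfl; exact F1_nonsq p q hp hq hpq 0 hx (zero_mem _)
  have hz : (x * y / p) ^ 2 = (((q : ℤ) * s : ℤ) : F) := by
    rw [div_pow, mul_pow, hx, hy]; push_cast; field_simp
  obtain ⟨B1, a1, b1, c1⟩ := F1_sub x y p q _ hp hq hpq h4 hx hy (F1_ext x y htop)
  obtain ⟨B2, a2, b2, c2⟩ := F1_sub y x p s _ hp hs hps h4 hy hx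
    (fun K h1 h2 => F1_ext x y htop K h2 h1)
  obtain ⟨B3, a3, b3, c3⟩ := F1_sub (x * y / p) x q s _ hq hs hqs h4 hz hx
    (fun K h1 h2 => F1_ext x y htop K h2 (by
      have : y = (x * y / p) * p / x := by field_simp
      rw [this]
      exact K.div_mem (K.mul_mem h1 (_root_.natCast_mem K p)) h2))
  have d3 : B3.σ y = -y := by
    have : y = (x * y / p) * p / x := by field_simp
    have h2 := congrArg B3.σ this
    rw [map_div₀, map_mul, b3, c3, map_natCast] at h2
    rw [h2]
    field_simp
  refine ⟨⟨B1, B2, B3, ?_, ?_, ?_, ?_, ?_, ?_⟩⟩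
  · rw [a2, c1]
  · rw [a3, map_div₀, map_mul, b1, c1, map_natCast]; ring
  · rw [a1, c2]
  · rw [a3, map_div₀, map_mul, b2, c2, map_natCast]; ring
  · rw [a1, c3]
  · intro w
    let f : F →ₐ[ℚ] F := ((B2.σ.restrictScalars ℚ : F ≃ₐ[ℚ] F) : F →ₐ[ℚ] F).comp
      ((B1.σ.restrictScalars ℚ : F ≃ₐ[ℚ] F) : F →ₐ[ℚ] F)
    let g : F →ₐ[ℚ] F := ((B3.σ.restrictScalars ℚ : F ≃ₐ[ℚ] F) : F →ₐ[ℚ] F)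
    have hK := F1_ext x y htop (IntermediateField.mk (AlgHom.equalizer f g) (by
      intro a (ha : f a = g a)
      change f a⁻¹ = g a⁻¹
      rw [map_inv₀, map_inv₀, ha])) (by
        change B2.σ (B1.σ x) = B3.σ x
        rw [b1, c2, c3]) (by
        change B2.σ (B1.σ y) = B3.σ y
        rw [c1, map_neg, b2, d3])
    have : w ∈ (⊤ : IntermediateField ℚ F) := trivial
    rw [← hK] at this
    exact this

/-- The real biquadratic field `F = ℚ(√(pq), √(ps))`, realized inside `ℂ`. -/
noncomputable def biquad (p q s : ℕ) : IntermediateField ℚ ℂ :=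
  IntermediateField.adjoin ℚ
    {((Real.sqrt (p * q) : ℝ) : ℂ), ((Real.sqrt (p * s) : ℝ) : ℂ)}

lemma sqrt_sq_complex (a b : ℕ) : ((Real.sqrt (a * b) : ℝ) : ℂ) ^ 2 = (a : ℂ) * b := by
  rw [← Complex.ofReal_pow, Real.sq_sqrt (by positivity)]; push_cast; rfl

theorem two_class_group_of_biquadratic
    (p q s : ℕ) (hp : p.Prime) (hq : q.Prime) (hs : s.Prime)
    (hpq : p ≠ q) (hps : p ≠ s) (hqs : q ≠ s)
    (hp8 : p % 8 = 5) (hq8 : q % 8 = 3) (hs4 : s % 4 = 3)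
    (hQRq : IsSquare (p : ZMod q)) (hQRs : IsSquare (p : ZMod s)) :
    ∀ P : Sylow 2 (ClassGroup (𝓞 (biquad p q s))),
      Nonempty ((P : Subgroup (ClassGroup (𝓞 (biquad p q s)))) ≃*
        (Multiplicative (ZMod 2) × Multiplicative (ZMod 2))) := by
  have : Fact p.Prime := ⟨hp⟩
  have : Fact q.Prime := ⟨hq⟩
  have : Fact s.Prime := ⟨hs⟩
  have H : Hyp p q s := ⟨hp8, by omega, hs4, hqs, hQRq, hQRs,
    (ZMod.exists_sq_eq_prime_iff_of_mod_four_eq_one (by omega) (by omega)).mpr hQRq,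
    (ZMod.exists_sq_eq_prime_iff_of_mod_four_eq_one (by omega) (by omega)).mpr hQRs⟩
  have hfd : FiniteDimensional ℚ (biquad p q s) := by
    apply IntermediateField.finiteDimensional_adjoin
    have hIntg : ∀ a b : ℕ, IsIntegral ℚ ((Real.sqrt (a * b) : ℝ) : ℂ) := by
      intro a b
      apply IsIntegral.of_pow two_pos
      rw [sqrt_sq_complex]
      have := isIntegral_algebraMap (R := ℚ) (A := ℂ) (x := (a : ℚ) * b)
      simpa using this
    rintro _ (rfl | rfl)
    · exact hIntg p q
    · exact hIntg p s
  have : NumberField (biquad p q s) := ⟨⟩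
  set x : biquad p q s := ⟨_, IntermediateField.subset_adjoin ℚ _ (Set.mem_insert _ _)⟩ with hx
  set y : biquad p q s := ⟨_, IntermediateField.subset_adjoin ℚ _
    (Set.mem_insert_of_mem _ (Set.mem_singleton _))⟩ with hy
  have htop : IntermediateField.adjoin ℚ {x, y} = ⊤ := by
    rw [eq_top_iff]
    rintro ⟨w, hw⟩ -
    have key : ∀ K : IntermediateField ℚ (biquad p q s), x ∈ K → y ∈ K →
        (⟨w, hw⟩ : biquad p q s) ∈ K := by
      intro K hxK hyK
      induction hw using IntermediateField.adjoin_induction with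
      | mem a ha =>
        rcases ha with rfl | rfl
        · exact hxK
        · exact hyK
      | algebraMap r =>
        convert K.algebraMap_mem r using 1
        apply Subtype.ext
        simp
      | add a b ha hb h1 h2 => exact K.add_mem h1 h2
      | inv a ha h1 => exact K.inv_mem h1
      | mul a b ha hb h1 h2 => exact K.mul_mem h1 h2
    exact key _ (IntermediateField.subset_adjoin ℚ _ (Set.mem_insert _ _))
      (IntermediateField.subset_adjoin ℚ _ (Set.mem_insert_of_mem _ (Set.mem_singleton _)))
  obtain ⟨B⟩ := F1_biq x y p q s hp hq hs hpq hps hqs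
    (by apply Subtype.ext; push_cast; exact sqrt_sq_complex p q)
    (by apply Subtype.ext; push_cast; exact sqrt_sq_complex p s) htop
  exact B.final H
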